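/- arXiv:1002.0381 — 2 statements merged into one kernel-verified Lean document; each statement's English description precedes it below -/
import Mathlib

section
/- Moments of the maximum: For every Λ̄ > 0, ε > 0 and p ≥ 1 there exists a constant c = c(Λ̄, ε, p, V) > 0 such that the following holds. For every finite connected F ⊆ ℤ² of diameter R ≥ 2, every u ∈ ℝ², and every boundary condition ζ : ∂F → ℝ with max_{x∈∂F} |ζ(x) − u·x| ≤ Λ̄ (log R)^Λ̄, if h is distributed according to the GL measure P_F^ζ and M = max_{x∈F} |h(x) − u·x|, then (E[M^p])^{1/p} ≤ c·R^ε. -/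
/-!
Write `h - u·x` for the tilt-corrected height. If its exponential moments at each site of `F` are
at most `R ^ O(1)` at a scale `D = O((log R) ^ Λ + log R)`, then its `q`-th moments at each site
are at most `R ^ O(1) * D ^ q`, and summing over the `O(R²)` sites costs another power of `R`.
After the `q`-th root, `q` large, these powers and `D` are all absorbed in `R ^ ε`.

For the exponential moments, put `F ∪ ∂F` in the torus of side `2 ^ n`, where
`R + 2 < 2 ^ n ≤ 4 R`, and consider on it the energy `∑ V(∇h + u)`. The point reflection
`h ↦ -h(2x - ·)` preserves it, so `h(x) - avg h` is symmetric whatever the tilt `u`. Comparing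
averages over boxes of dyadic sides gives `(h(x) - avg h)² ≤ n² ∑ |∇h|²`, hence, as `V'' ≥ a`, a
Gaussian bound with variance `O(n² / a)` for `h(x) - avg h`.

That last implication is obtained by duplication. For independent copies `h, k`, rotate to
`f = (h + k) / √2` and `g = (h - k) / √2`. Given `f`, the field `g` has an even potential whose
second differences obey the same bounds, and `h - k = √2 g`. Hence a bound
`E exp(t v) ≤ exp(σ t² + δ)` for even potentials improves itself to one with error `δ / 2`. A crude
comparison with Gaussians starts the iteration with a finite error, which vanishes in the limit.

Finally, conditioned off `F`, the torus measure is the Ginzburg–Landau measure on `F` with some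
boundary condition `k(y) + u·y`. By the four functions theorem, convexity of `V` makes
`E exp(s h(x))` monotone in the boundary condition. The given `ζ` is within `L` of `u·y`, so it
lies below this boundary condition shifted by `L - min k` and above it shifted by `-L - max k`. As
the site of the extremum is unknown, `exp(-s k)` is summed over all sites of the torus, at the cost
of only a power of `R`, and the torus bounds for the differences `h(x) - h(y)` apply.
-/

open MeasureTheory ProbabilityTheory Real
open scoped ENNReal NNReal Classical

noncomputable section

abbrev Z2 := ℤ × ℤ

/-- Nearest-neighbor adjacency in `ℤ²` (Euclidean distance one). -/
def adjZ (x y : Z2) : Prop := (x.1 - y.1) ^ 2 + (x.2 - y.2) ^ 2 = 1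

/-- Exterior vertex boundary `∂D` of a set `D ⊆ ℤ²`. -/
def bdry (D : Set Z2) : Set Z2 := {x | x ∉ D ∧ ∃ y ∈ D, adjZ x y}

/-- Euclidean distance on `ℤ²`. -/
def edist2 (x y : Z2) : ℝ :=
  Real.sqrt (((x.1 : ℝ) - (y.1 : ℝ)) ^ 2 + ((x.2 : ℝ) - (y.2 : ℝ)) ^ 2)

/-- Euclidean distance from a point to a set. -/
def distToSet (x : Z2) (S : Set Z2) : ℝ := sInf (edist2 x '' S)

/-- Euclidean diameter of a set in `ℤ²`. -/
def diamZ (D : Set Z2) : ℝ := sSup {d : ℝ | ∃ x ∈ D, ∃ y ∈ D, d = edist2 x y}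

/-- Discrete Euclidean ball. -/
def ballZ (y : Z2) (r : ℝ) : Set Z2 := {z | edist2 z y ≤ r}

/-- Positively oriented nearest-neighbor edges with at least one endpoint in `D`. -/
def edgesOf (D : Set Z2) : Set (Z2 × Z2) :=
  {b | (b.2 = b.1 + ((1, 0) : Z2) ∨ b.2 = b.1 + ((0, 1) : Z2)) ∧ (b.1 ∈ D ∨ b.2 ∈ D)}

/-- Positively oriented nearest-neighbor edges with both endpoints in `D`. -/
def intEdges (D : Set Z2) : Set (Z2 × Z2) :=
  {b | (b.2 = b.1 + ((1, 0) : Z2) ∨ b.2 = b.1 + ((0, 1) : Z2)) ∧ b.1 ∈ D ∧ b.2 ∈ D}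

/-- Edges with one endpoint in `D` and the other in `∂D`. -/
def bdEdges (D : Set Z2) : Set (Z2 × Z2) :=
  {b | (b.2 = b.1 + ((1, 0) : Z2) ∨ b.2 = b.1 + ((0, 1) : Z2)) ∧
    ((b.1 ∈ D ∧ b.2 ∈ bdry D) ∨ (b.1 ∈ bdry D ∧ b.2 ∈ D))}

/-- The endpoint of an edge lying outside `D` (for boundary edges). -/
def bEnd (D : Set Z2) (b : Z2 × Z2) : Z2 := if b.1 ∈ D then b.2 else b.1

/-- Discrete gradient of `f` across the oriented edge `b`. -/
def grad (f : Z2 → ℝ) (b : Z2 × Z2) : ℝ := f b.2 - f b.1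

/-- `D ⊆ ℤ²` is connected (as an induced subgraph of the nearest-neighbor lattice). -/
def DiscConnected (D : Set Z2) : Prop :=
  D.Nonempty ∧ ∀ x ∈ D, ∀ y ∈ D, ∃ (n : ℕ) (p : ℕ → Z2),
    p 0 = x ∧ p n = y ∧ (∀ i ≤ n, p i ∈ D) ∧ ∀ i < n, adjZ (p i) (p (i + 1))

/-- `h ∨ φ`: the field `h` on `D` extended by the boundary condition `φ` off `D`. -/
def vee (D : Finset Z2) (h : ↥D → ℝ) (φ : Z2 → ℝ) : Z2 → ℝ :=
  fun x => if hx : x ∈ D then h ⟨x, hx⟩ else φ x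

/-- Ginzburg–Landau Hamiltonian `∑_{b ∈ D*} V(∇(h∨φ)(b))`. -/
def glEnergy (V : ℝ → ℝ) (D : Finset Z2) (φ : Z2 → ℝ) (h : ↥D → ℝ) : ℝ :=
  ∑ᶠ b ∈ edgesOf (D : Set Z2), V (grad (vee D h φ) b)

/-- Unnormalized GL measure: density `exp(−H)` w.r.t. Lebesgue measure on `ℝ^D`. -/
def glFree (V : ℝ → ℝ) (D : Finset Z2) (φ : Z2 → ℝ) : Measure (↥D → ℝ) :=
  volume.withDensity fun h => ENNReal.ofReal (Real.exp (-(glEnergy V D φ h)))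

/-- `P` is the GL measure on `D` with potential `V` and boundary condition `φ`:
a probability measure proportional to `exp(−H) dh`. -/
def IsGL (V : ℝ → ℝ) (D : Finset Z2) (φ : Z2 → ℝ) (P : Measure (↥D → ℝ)) : Prop :=
  IsProbabilityMeasure P ∧ ∃ c : ℝ≥0∞, c ≠ 0 ∧ c ≠ ⊤ ∧ P = c • glFree V D φ

/-- `μ` is a coupling of `P` and `Q`. -/
def IsCoupling {α : Type*} [MeasurableSpace α] (μ : Measure (α × α)) (P Q : Measure α) : Prop :=
  IsProbabilityMeasure μ ∧ μ.map Prod.fst = P ∧ μ.map Prod.snd = Q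

/-- `f` is discrete-harmonic at `x`: the sum of the increments to the four neighbors vanishes. -/
def DiscHarmAt (f : Z2 → ℝ) (x : Z2) : Prop :=
  f (x + ((1, 0) : Z2)) + f (x - ((1, 0) : Z2)) + f (x + ((0, 1) : Z2)) + f (x - ((0, 1) : Z2))
    - 4 * f x = 0

/-- `D(r) = {x ∈ D : dist(x, ∂D) ≥ r}`. -/
def innerSet (D : Finset Z2) (r : ℝ) : Set Z2 :=
  {x | x ∈ D ∧ r ≤ distToSet x (bdry (D : Set Z2))}

/-- The exponential function with values in `ℝ≥0∞`, for densities in Lebesgue integrals. -/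
def eexp (x : ℝ) : ℝ≥0∞ := ENNReal.ofReal (Real.exp x)

section eexp

@[fun_prop]
theorem continuous_eexp : Continuous eexp := ENNReal.continuous_ofReal.comp Real.continuous_exp

@[fun_prop]
theorem measurable_eexp : Measurable eexp := continuous_eexp.measurable

theorem eexp_ne_top (x : ℝ) : eexp x ≠ ⊤ := ENNReal.ofReal_ne_top

theorem eexp_pos (x : ℝ) : 0 < eexp x := ENNReal.ofReal_pos.2 (Real.exp_pos x)

theorem eexp_add (x y : ℝ) : eexp (x + y) = eexp x * eexp y := by
  rw [eexp, Real.exp_add, ENNReal.ofReal_mul (Real.exp_nonneg x), eexp, eexp]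

@[simp]
theorem eexp_zero : eexp 0 = 1 := by rw [eexp, Real.exp_zero, ENNReal.ofReal_one]

@[gcongr]
theorem eexp_le_eexp {x y : ℝ} (h : x ≤ y) : eexp x ≤ eexp y :=
  ENNReal.ofReal_le_ofReal (Real.exp_le_exp.2 h)

theorem exists_le_eexp_mul {I J : ℝ≥0∞} (hI : I ≠ ⊤) (hJ : J ≠ 0) : ∃ C, I ≤ eexp C * J := by
  refine ⟨(I / J).toReal, ?_⟩
  rw [← ENNReal.div_le_iff_le_mul (Or.inl hJ) (Or.inr (eexp_pos _).ne'), eexp,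
    ENNReal.le_ofReal_iff_toReal_le (ENNReal.div_ne_top hI hJ) (Real.exp_nonneg _)]
  linarith [Real.add_one_le_exp (I / J).toReal]

end eexp

/-! ### The four functions theorem for product measures -/

section fourFunctions

/-- For finite `c ≠ 0` this is `c + d - a - b = ((c - a) (c - b) + (c d - a b)) / c`. -/
theorem add_le_add_of_mul_le_mul_of_le {a b c d : ℝ≥0∞} (ha : a ≤ c) (hb : b ≤ c)
    (hab : a * b ≤ c * d) : a + b ≤ c + d := by
  rcases eq_or_ne c ⊤ with rfl | hc
  · simp
  rcases eq_or_ne d ⊤ with rfl | hd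
  · simp
  lift c to ℝ≥0 using hc
  lift d to ℝ≥0 using hd
  lift a to ℝ≥0 using ne_top_of_le_ne_top ENNReal.coe_ne_top ha
  lift b to ℝ≥0 using ne_top_of_le_ne_top ENNReal.coe_ne_top hb
  norm_cast at *
  rw [← NNReal.coe_le_coe] at *
  push_cast at *
  rcases eq_or_lt_of_le c.coe_nonneg with h0 | h0
  · linarith [a.coe_nonneg, b.coe_nonneg, d.coe_nonneg]
  · nlinarith [mul_nonneg (sub_nonneg.2 ha) (sub_nonneg.2 hb)]

theorem symm_le_symm_of_four_functions {α : Type*} [LinearOrder α] {f₁ f₂ f₃ f₄ : α → ℝ≥0∞}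
    (h : ∀ x y, f₁ x * f₂ y ≤ f₃ (x ⊓ y) * f₄ (x ⊔ y)) (x y : α) :
    f₁ x * f₂ y + f₁ y * f₂ x ≤ f₃ x * f₄ y + f₃ y * f₄ x := by
  wlog hxy : x ≤ y generalizing x y
  · rw [add_comm, add_comm (f₃ x * f₄ y)]
    exact this y x (le_of_not_ge hxy)
  have hxx : f₁ x * f₂ x ≤ f₃ x * f₄ x := by simpa using h x x
  have hyy : f₁ y * f₂ y ≤ f₃ y * f₄ y := by simpa using h y y
  refine add_le_add_of_mul_le_mul_of_le (by simpa [hxy] using h x y) (by simpa [hxy] using h y x) ?_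
  calc f₁ x * f₂ y * (f₁ y * f₂ x) = f₁ x * f₂ x * (f₁ y * f₂ y) := by ring
    _ ≤ f₃ x * f₄ x * (f₃ y * f₄ y) := by gcongr
    _ = f₃ x * f₄ y * (f₃ y * f₄ x) := by ring

theorem two_mul_lintegral_mul_lintegral {α : Type*} [MeasurableSpace α] (μ : Measure α)
    {f g : α → ℝ≥0∞} (hf : Measurable f) (hg : Measurable g) :
    2 * ((∫⁻ x, f x ∂μ) * ∫⁻ x, g x ∂μ) = ∫⁻ x, ∫⁻ y, (f x * g y + f y * g x) ∂μ ∂μ := by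
  have hfg (x : α) : ∫⁻ y, (f x * g y + f y * g x) ∂μ =
      f x * ∫⁻ y, g y ∂μ + (∫⁻ y, f y ∂μ) * g x := by
    rw [lintegral_add_left (by fun_prop), lintegral_const_mul _ hg, lintegral_mul_const _ hf]
  simp_rw [hfg]
  rw [lintegral_add_left (by fun_prop), lintegral_mul_const _ hf, lintegral_const_mul _ hg, two_mul]

theorem four_functions_lintegral {α : Type*} [LinearOrder α] [MeasurableSpace α] (μ : Measure α)
    {f₁ f₂ f₃ f₄ : α → ℝ≥0∞} (h₁ : Measurable f₁) (h₂ : Measurable f₂) (h₃ : Measurable f₃)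
    (h₄ : Measurable f₄) (h : ∀ x y, f₁ x * f₂ y ≤ f₃ (x ⊓ y) * f₄ (x ⊔ y)) :
    (∫⁻ x, f₁ x ∂μ) * ∫⁻ x, f₂ x ∂μ ≤ (∫⁻ x, f₃ x ∂μ) * ∫⁻ x, f₄ x ∂μ := by
  refine (ENNReal.mul_le_mul_iff_right two_ne_zero ENNReal.ofNat_ne_top).1 ?_
  rw [two_mul_lintegral_mul_lintegral μ h₁ h₂, two_mul_lintegral_mul_lintegral μ h₃ h₄]
  exact lintegral_mono fun x => lintegral_mono fun y => symm_le_symm_of_four_functions h x y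

variable {ι : Type*} {X : ι → Type*} [∀ i, LinearOrder (X i)]
  [∀ i, MeasurableSpace (X i)] (μ : ∀ i, Measure (X i)) [∀ i, SigmaFinite (μ i)]
  {f₁ f₂ f₃ f₄ : (∀ i, X i) → ℝ≥0∞}

theorem four_functions_lmarginal (h₁ : Measurable f₁) (h₂ : Measurable f₂) (h₃ : Measurable f₃)
    (h₄ : Measurable f₄) (h : ∀ x y, f₁ x * f₂ y ≤ f₃ (x ⊓ y) * f₄ (x ⊔ y)) (s : Finset ι)
    (x y : ∀ i, X i) :
    (∫⋯∫⁻_s, f₁ ∂μ) x * (∫⋯∫⁻_s, f₂ ∂μ) y ≤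
      (∫⋯∫⁻_s, f₃ ∂μ) (x ⊓ y) * (∫⋯∫⁻_s, f₄ ∂μ) (x ⊔ y) := by
  induction s using Finset.induction_on generalizing x y with
  | empty => simpa only [lmarginal_empty] using h x y
  | insert i s hi ih =>
    have hm (f : (∀ i, X i) → ℝ≥0∞) (hf : Measurable f) (z : ∀ i, X i) :
        Measurable fun t => (∫⋯∫⁻_s, f ∂μ) (Function.update z i t) :=
      (hf.lmarginal μ).comp (measurable_update z)
    simp only [lmarginal_insert, h₁, h₂, h₃, h₄, hi, not_false_eq_true]
    refine four_functions_lintegral (μ i) (hm f₁ h₁ x) (hm f₂ h₂ y) (hm f₃ h₃ _) (hm f₄ h₄ _)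
      fun a b => (ih _ _).trans_eq ?_
    congr 2 <;> ext j <;> rcases eq_or_ne j i with rfl | hj <;> simp [*]

theorem four_functions_lintegral_pi [Fintype ι] (h₁ : Measurable f₁) (h₂ : Measurable f₂)
    (h₃ : Measurable f₃) (h₄ : Measurable f₄)
    (h : ∀ x y, f₁ x * f₂ y ≤ f₃ (x ⊓ y) * f₄ (x ⊔ y)) :
    (∫⁻ x, f₁ x ∂Measure.pi μ) * ∫⁻ x, f₂ x ∂Measure.pi μ ≤
      (∫⁻ x, f₃ x ∂Measure.pi μ) * ∫⁻ x, f₄ x ∂Measure.pi μ := by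
  by_cases hX : Nonempty (∀ i, X i)
  · obtain ⟨x⟩ := hX
    simpa only [lmarginal_univ, inf_idem, sup_idem] using
      four_functions_lmarginal μ h₁ h₂ h₃ h₄ h Finset.univ x x
  · have := not_nonempty_iff.1 hX
    simp [lintegral_of_isEmpty]

variable [Fintype ι] {ρ ρ' g : (∀ i, X i) → ℝ≥0∞}

/-- Holley's inequality, without normalisation. -/
theorem lintegral_mul_lintegral_le_of_monotone (hρ : Measurable ρ) (hρ' : Measurable ρ')
    (hg : Measurable g) (hmono : Monotone g)
    (h : ∀ x y, ρ x * ρ' y ≤ ρ (x ⊓ y) * ρ' (x ⊔ y)) :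
    (∫⁻ x, g x * ρ x ∂Measure.pi μ) * ∫⁻ x, ρ' x ∂Measure.pi μ ≤
      (∫⁻ x, ρ x ∂Measure.pi μ) * ∫⁻ x, g x * ρ' x ∂Measure.pi μ := by
  refine four_functions_lintegral_pi μ (by fun_prop) hρ' hρ (by fun_prop) fun x y => ?_
  calc g x * ρ x * ρ' y = g x * (ρ x * ρ' y) := by ring
    _ ≤ g (x ⊔ y) * (ρ (x ⊓ y) * ρ' (x ⊔ y)) := mul_le_mul' (hmono le_sup_left) (h x y)
    _ = ρ (x ⊓ y) * (g (x ⊔ y) * ρ' (x ⊔ y)) := by ring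

theorem lintegral_mul_lintegral_le_of_antitone (hρ : Measurable ρ) (hρ' : Measurable ρ')
    (hg : Measurable g) (hanti : Antitone g)
    (h : ∀ x y, ρ' x * ρ y ≤ ρ' (x ⊓ y) * ρ (x ⊔ y)) :
    (∫⁻ x, g x * ρ x ∂Measure.pi μ) * ∫⁻ x, ρ' x ∂Measure.pi μ ≤
      (∫⁻ x, ρ x ∂Measure.pi μ) * ∫⁻ x, g x * ρ' x ∂Measure.pi μ := by
  rw [mul_comm, mul_comm (∫⁻ x, ρ x ∂_)]
  refine four_functions_lintegral_pi μ hρ' (by fun_prop) (by fun_prop) hρ fun x y => ?_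
  calc ρ' x * (g y * ρ y) = g y * (ρ' x * ρ y) := by ring
    _ ≤ g (x ⊓ y) * (ρ' (x ⊓ y) * ρ (x ⊔ y)) := mul_le_mul' (hanti inf_le_right) (h x y)
    _ = g (x ⊓ y) * ρ' (x ⊓ y) * ρ (x ⊔ y) := by ring

end fourFunctions

/-! ### Monotonicity in the boundary condition -/

section boundary

theorem convexOn_add_le_add_of_mem_Icc {V : ℝ → ℝ} {s : Set ℝ} (hV : ConvexOn ℝ s V) {p q w : ℝ}
    (hp : p ∈ s) (hw : w ∈ s) (hq : q ∈ Set.Icc p w) : V q + V (p + w - q) ≤ V p + V w := by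
  obtain ⟨a, b, ha, hb, hab, rfl⟩ := Icc_subset_segment hq
  have hr : p + w - (a • p + b • w) = b • p + a • w := by
    simp only [smul_eq_mul]
    linear_combination (-p - w) * hab
  have h₁ := hV.2 hp hw ha hb hab
  have h₂ := hV.2 hp hw hb ha (by rw [add_comm, hab])
  rw [hr]
  simp only [smul_eq_mul] at h₁ h₂ ⊢
  linear_combination h₁ + h₂ + (V p + V w) * hab

theorem convexOn_inf_sub_inf_add_sup_sub_sup_le {V : ℝ → ℝ} (hV : ConvexOn ℝ Set.univ V)
    (x y x' y' : ℝ) : V (y ⊓ y' - x ⊓ x') + V (y ⊔ y' - x ⊔ x') ≤ V (y - x) + V (y' - x') := by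
  have hex (p q r w : ℝ) (hpq : p ≤ q) (hqw : q ≤ w) (hsum : q + r = p + w) :
      V q + V r ≤ V p + V w := by
    rw [show r = p + w - q by linarith]
    exact convexOn_add_le_add_of_mem_Icc hV (Set.mem_univ p) (Set.mem_univ w) ⟨hpq, hqw⟩
  rcases le_total x x' with h₁ | h₁ <;> rcases le_total y y' with h₂ | h₂ <;>
    simp only [inf_eq_left.2, inf_eq_right.2, sup_eq_left.2, sup_eq_right.2, h₁, h₂]
  · rfl
  · rw [add_comm (V (y - x))]
    exact hex _ _ _ _ (by linarith) (by linarith) (by ring)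
  · exact hex _ _ _ _ (by linarith) (by linarith) (by ring)
  · rw [add_comm]

theorem edgesOf_finite (F : Finset Z2) : (edgesOf (F : Set Z2)).Finite := by
  have hend (v : Z2) : {b : Z2 × Z2 | b.2 = b.1 + v ∧ (b.1 ∈ F ∨ b.2 ∈ F)}.Finite := by
    refine ((F ∪ F.image (· - v)).image fun x => (x, x + v)).finite_toSet.subset ?_
    rintro ⟨x, y⟩ ⟨hxy : y = x + v, h⟩
    subst hxy
    rcases h with h | h
    · exact Finset.mem_image_of_mem _ (Finset.mem_union_left _ h)
    · exact Finset.mem_image_of_mem _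
        (Finset.mem_union_right _ (Finset.mem_image.2 ⟨_, h, add_sub_cancel_right x v⟩))
  refine ((hend (1, 0)).union (hend (0, 1))).subset ?_
  rintro b ⟨h | h, hF⟩
  exacts [Or.inl ⟨h, hF⟩, Or.inr ⟨h, hF⟩]

theorem glEnergy_eq_sum (V : ℝ → ℝ) (F : Finset Z2) (φ : Z2 → ℝ) (h : ↥F → ℝ) :
    glEnergy V F φ h = ∑ b ∈ (edgesOf_finite F).toFinset, V (grad (vee F h φ) b) :=
  finsum_mem_eq_finite_toFinset_sum _ _

theorem mem_or_mem_bdry_of_mem_edgesOf {D : Set Z2} {b : Z2 × Z2} (hb : b ∈ edgesOf D) :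
    (b.1 ∈ D ∨ b.1 ∈ bdry D) ∧ (b.2 ∈ D ∨ b.2 ∈ bdry D) := by
  obtain ⟨hstep, hD⟩ := hb
  have hadj : adjZ b.1 b.2 ∧ adjZ b.2 b.1 := by
    rcases hstep with h | h <;> simp [adjZ, h]
  exact ⟨or_iff_not_imp_left.2 fun h => ⟨h, b.2, hD.resolve_left h, hadj.1⟩,
    or_iff_not_imp_left.2 fun h => ⟨h, b.1, hD.resolve_right h, hadj.2⟩⟩

variable {V : ℝ → ℝ} {F : Finset Z2} {φ φ' ζ : Z2 → ℝ}

theorem glEnergy_inf_add_glEnergy_sup_le (hV : ConvexOn ℝ Set.univ V)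
    (hφ : ∀ y ∈ bdry (F : Set Z2), φ y ≤ φ' y) (h k : ↥F → ℝ) :
    glEnergy V F φ (h ⊓ k) + glEnergy V F φ' (h ⊔ k) ≤ glEnergy V F φ h + glEnergy V F φ' k := by
  simp only [glEnergy_eq_sum, ← Finset.sum_add_distrib]
  refine Finset.sum_le_sum fun b hb => ?_
  rw [Set.Finite.mem_toFinset] at hb
  have hvee (z : Z2) (hz : z ∈ F ∨ z ∈ bdry (F : Set Z2)) :
      vee F (h ⊓ k) φ z = vee F h φ z ⊓ vee F k φ' z ∧
        vee F (h ⊔ k) φ' z = vee F h φ z ⊔ vee F k φ' z := by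
    by_cases hF : z ∈ F
    · simp [vee, hF]
    · simp [vee, hF, hφ z (hz.resolve_left hF)]
  obtain ⟨h₁, h₂⟩ := mem_or_mem_bdry_of_mem_edgesOf hb
  simp only [grad, (hvee _ h₁).1, (hvee _ h₁).2, (hvee _ h₂).1, (hvee _ h₂).2]
  exact convexOn_inf_sub_inf_add_sup_sub_sup_le hV _ _ _ _

theorem continuous_vee (F : Finset Z2) (φ : Z2 → ℝ) (z : Z2) :
    Continuous fun h : ↥F → ℝ => vee F h φ z := by
  by_cases hz : z ∈ F
  · simp only [vee, hz, dite_true]; fun_prop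
  · simp only [vee, hz, dite_false]; fun_prop

theorem continuous_glEnergy (hV : Continuous V) (F : Finset Z2) (φ : Z2 → ℝ) :
    Continuous (glEnergy V F φ) := by
  simp_rw [funext (glEnergy_eq_sum V F φ)]
  exact continuous_finsetSum _ fun b _ =>
    hV.comp ((continuous_vee F φ b.2).sub (continuous_vee F φ b.1))

/-- The unnormalised density of the Ginzburg–Landau measure, the one in `glFree`. -/
def glDens (V : ℝ → ℝ) (F : Finset Z2) (φ : Z2 → ℝ) (h : ↥F → ℝ) : ℝ≥0∞ :=
  eexp (-(glEnergy V F φ h))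

theorem measurable_glDens (hV : Continuous V) (F : Finset Z2) (φ : Z2 → ℝ) :
    Measurable (glDens V F φ) :=
  measurable_eexp.comp (continuous_glEnergy hV F φ).neg.measurable

theorem glDens_mul_glDens_le (hV : ConvexOn ℝ Set.univ V)
    (hφ : ∀ y ∈ bdry (F : Set Z2), φ y ≤ φ' y) (h k : ↥F → ℝ) :
    glDens V F φ h * glDens V F φ' k ≤ glDens V F φ (h ⊓ k) * glDens V F φ' (h ⊔ k) := by
  simp only [glDens, ← eexp_add]
  refine eexp_le_eexp ?_
  linarith [glEnergy_inf_add_glEnergy_sup_le hV hφ h k]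

theorem continuous_of_convexOn_univ (hV : ConvexOn ℝ Set.univ V) : Continuous V :=
  continuousOn_univ.1 (hV.continuousOn isOpen_univ)

theorem lintegral_eexp_glDens_mono (hV : ConvexOn ℝ Set.univ V) (x : ↥F) {s : ℝ}
    (hs : ∀ y ∈ bdry (F : Set Z2), s * φ y ≤ s * φ' y) :
    (∫⁻ h, eexp (s * h x) * glDens V F φ h) * ∫⁻ h, glDens V F φ' h ≤
      (∫⁻ h, glDens V F φ h) * ∫⁻ h, eexp (s * h x) * glDens V F φ' h := by
  have hVc := continuous_of_convexOn_univ hV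
  have hm := measurable_glDens hVc F φ
  have hm' := measurable_glDens hVc F φ'
  rcases lt_trichotomy s 0 with h0 | rfl | h0
  · exact lintegral_mul_lintegral_le_of_antitone _ hm hm' (by fun_prop)
      (fun h k hhk => eexp_le_eexp (mul_le_mul_of_nonpos_left (hhk x) h0.le))
      (glDens_mul_glDens_le hV fun y hy => (mul_le_mul_left_of_neg h0).1 (hs y hy))
  · simp
  · exact lintegral_mul_lintegral_le_of_monotone _ hm hm' (by fun_prop)
      (fun h k hhk => eexp_le_eexp (mul_le_mul_of_nonneg_left (hhk x) h0.le))
      (glDens_mul_glDens_le hV fun y hy => (mul_le_mul_iff_right₀ h0).1 (hs y hy))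

theorem glDens_add_const (V : ℝ → ℝ) (F : Finset Z2) (φ : Z2 → ℝ) (K : ℝ) (h : ↥F → ℝ) :
    glDens V F (fun y => φ y + K) (h + fun _ => K) = glDens V F φ h := by
  have hv (z : Z2) : vee F (h + fun _ => K) (fun y => φ y + K) z = vee F h φ z + K := by
    by_cases hz : z ∈ F <;> simp [vee, hz]
  simp [glDens, glEnergy, grad, hv]

theorem lintegral_eexp_glDens_le_shift (hV : ConvexOn ℝ Set.univ V) (x : ↥F) {s K : ℝ}
    (hs : ∀ y ∈ bdry (F : Set Z2), s * ζ y ≤ s * (φ y + K)) :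
    (∫⁻ h, eexp (s * h x) * glDens V F ζ h) * ∫⁻ h, glDens V F φ h ≤
      (∫⁻ h, glDens V F ζ h) * ∫⁻ h, eexp (s * (h x + K)) * glDens V F φ h := by
  have := lintegral_eexp_glDens_mono hV x hs
  rw [← lintegral_add_right_eq_self (glDens V F fun y => φ y + K) (fun _ => K),
    ← lintegral_add_right_eq_self
      (fun h : ↥F → ℝ => eexp (s * h x) * glDens V F (fun y => φ y + K) h) (fun _ => K)] at this
  simpa only [glDens_add_const, Pi.add_apply] using this

end boundary

/-! ### Gaussian bounds by duplication -/

/-- The potential of `g` given `f`, when `(f + g) / √2` and `(f - g) / √2` are independent with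
potential `U`. -/
def duplicatePotential {E : Type*} [AddCommGroup E] [Module ℝ E] (U : E → ℝ) (f g : E) : ℝ :=
  U ((√2)⁻¹ • (f + g)) + U ((√2)⁻¹ • (f - g))

theorem even_duplicatePotential {E : Type*} [AddCommGroup E] [Module ℝ E] (U : E → ℝ) (f : E) :
    Function.Even (duplicatePotential U f) := fun g => by
  simp only [duplicatePotential, ← sub_eq_add_neg, sub_neg_eq_add]
  ring

section pinched

variable {E E' ι : Type*} [AddCommGroup E] [Module ℝ E] [TopologicalSpace E] [AddCommGroup E']
  [Module ℝ E'] [TopologicalSpace E'] {N N' : QuadraticForm ℝ E} {a A : ℝ} {U U' : E → ℝ}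

/-- `U` is continuous and its symmetric second differences lie between `a N` and `A N`: the form
which bounds on the second derivative of `U` take without differentiability. -/
structure Pinched (N : QuadraticForm ℝ E) (a A : ℝ) (U : E → ℝ) : Prop where
  continuous : Continuous U
  lower : ∀ f g, a * N g ≤ U (f + g) + U (f - g) - 2 * U f
  upper : ∀ f g, U (f + g) + U (f - g) - 2 * U f ≤ A * N g

namespace Pinched

theorem comp_linear_add_const {N : QuadraticForm ℝ E'} {U : E' → ℝ} [ContinuousAdd E']
    (hU : Pinched N a A U) (ℓ : E →L[ℝ] E') (c : E') :
    Pinched (N.comp ℓ.toLinearMap) a A fun h => U (ℓ h + c) where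
  continuous := hU.continuous.comp (by fun_prop)
  lower f g := by
    simpa [add_right_comm, sub_add_eq_add_sub] using hU.lower (ℓ f + c) (ℓ g)
  upper f g := by
    simpa [add_right_comm, sub_add_eq_add_sub] using hU.upper (ℓ f + c) (ℓ g)

theorem add (hU : Pinched N a A U) (hU' : Pinched N' a A U') :
    Pinched (N + N') a A fun h => U h + U' h where
  continuous := hU.continuous.add hU'.continuous
  lower f g := by
    rw [add_apply]
    linarith [hU.lower f g, hU'.lower f g]
  upper f g := by
    rw [add_apply]
    linarith [hU.upper f g, hU'.upper f g]

theorem sum {N : ι → QuadraticForm ℝ E} {U : ι → E → ℝ} (s : Finset ι)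
    (hU : ∀ i ∈ s, Pinched (N i) a A (U i)) :
    Pinched (∑ i ∈ s, N i) a A fun h => ∑ i ∈ s, U i h where
  continuous := continuous_finsetSum s fun i hi => (hU i hi).continuous
  lower f g := by
    simp only [sum_apply, Finset.mul_sum, ← Finset.sum_add_distrib,
      ← Finset.sum_sub_distrib]
    exact Finset.sum_le_sum fun i hi => (hU i hi).lower f g
  upper f g := by
    simp only [sum_apply, Finset.mul_sum, ← Finset.sum_add_distrib,
      ← Finset.sum_sub_distrib]
    exact Finset.sum_le_sum fun i hi => (hU i hi).upper f g

theorem bounds_of_even (hU : Pinched N a A U) (heven : Function.Even U) (g : E) :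
    U 0 + a / 2 * N g ≤ U g ∧ U g ≤ U 0 + A / 2 * N g := by
  have hl := hU.lower 0 g
  have hu := hU.upper 0 g
  rw [zero_add, zero_sub, heven] at hl hu
  constructor <;> linarith

end Pinched

theorem Pinched.duplicate [IsTopologicalAddGroup E] [ContinuousConstSMul ℝ E]
    (hU : Pinched N a A U) (f : E) : Pinched N a A (duplicatePotential U f) := by
  have hN (k : E) : N ((√2)⁻¹ • k) = N k / 2 := by
    rw [QuadraticMap.map_smul, ← mul_inv, Real.mul_self_sqrt zero_le_two, smul_eq_mul]
    ring
  have hsplit (g k : E) : duplicatePotential U f (g + k) + duplicatePotential U f (g - k) -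
      2 * duplicatePotential U f g =
      (U ((√2)⁻¹ • (f + g) + (√2)⁻¹ • k) + U ((√2)⁻¹ • (f + g) - (√2)⁻¹ • k) -
        2 * U ((√2)⁻¹ • (f + g))) +
      (U ((√2)⁻¹ • (f - g) + (√2)⁻¹ • k) + U ((√2)⁻¹ • (f - g) - (√2)⁻¹ • k) -
        2 * U ((√2)⁻¹ • (f - g))) := by
    simp only [duplicatePotential, ← smul_add, ← smul_sub, add_assoc, add_sub_assoc, sub_add,
      sub_sub]
    ring_nf
  have hUc := hU.continuous
  refine ⟨by unfold duplicatePotential; fun_prop, fun g k => ?_, fun g k => ?_⟩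
  · have h₁ := hU.lower ((√2)⁻¹ • (f + g)) ((√2)⁻¹ • k)
    have h₂ := hU.lower ((√2)⁻¹ • (f - g)) ((√2)⁻¹ • k)
    rw [hN] at h₁ h₂
    linarith [hsplit g k]
  · have h₁ := hU.upper ((√2)⁻¹ • (f + g)) ((√2)⁻¹ • k)
    have h₂ := hU.upper ((√2)⁻¹ • (f - g)) ((√2)⁻¹ • k)
    rw [hN] at h₁ h₂
    linarith [hsplit g k]

end pinched

section duplication

theorem continuous_quadraticForm {E : Type*} [NormedAddCommGroup E] [NormedSpace ℝ E]
    [FiniteDimensional ℝ E] (N : QuadraticForm ℝ E) : Continuous N := by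
  let B : E →ₗ[ℝ] E →L[ℝ] ℝ := LinearMap.toContinuousLinearMap.toLinearMap ∘ₗ N.associated
  have hB : (N : E → ℝ) = fun x => B x x := funext fun x =>
    (QuadraticMap.associated_eq_self_apply ℝ N x).symm
  have := LinearMap.continuous_of_finiteDimensional B
  rw [hB]
  fun_prop

variable {E : Type*} [NormedAddCommGroup E] [NormedSpace ℝ E] [MeasurableSpace E]

/-- The exponential integral `∫ exp(-U h + t v(h)) dμ(h)`, not normalised. -/
def tiltInt (μ : Measure E) (U : E → ℝ) (v : E →L[ℝ] ℝ) (t : ℝ) : ℝ≥0∞ :=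
  ∫⁻ h, eexp (-(U h) + t * v h) ∂μ

variable {μ : Measure E} {U : E → ℝ} {v : E →L[ℝ] ℝ} {N : QuadraticForm ℝ E} {a A σ C D : ℝ}

theorem tiltInt_zero : tiltInt μ U v 0 = ∫⁻ h, eexp (-(U h)) ∂μ := by
  simp only [tiltInt, zero_mul, add_zero]

theorem tiltInt_le_of_even (hσ : 0 < σ) (hv : ∀ g, v g ^ 2 ≤ σ * (a * N g))
    (hC : ∫⁻ g, eexp (-(a / 4 * N g)) ∂μ ≤ eexp C * ∫⁻ g, eexp (-(A / 2 * N g)) ∂μ)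
    (hU : Pinched N a A U) (heven : Function.Even U) (t : ℝ) :
    tiltInt μ U v t ≤ eexp (t ^ 2 * σ + C) * tiltInt μ U v 0 := by
  have hlin (g : E) : t * v g ≤ t ^ 2 * σ + a / 4 * N g := by
    refine le_of_mul_le_mul_left ?_ hσ
    nlinarith [sq_nonneg (t * σ - v g / 2), hv g]
  calc tiltInt μ U v t
      ≤ ∫⁻ g, eexp (-(U 0) + t ^ 2 * σ) * eexp (-(a / 4 * N g)) ∂μ := by
        refine lintegral_mono fun g => ?_
        rw [← eexp_add]
        exact eexp_le_eexp (by linarith [hlin g, (hU.bounds_of_even heven g).1])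
    _ ≤ eexp (-(U 0) + t ^ 2 * σ) * (eexp C * ∫⁻ g, eexp (-(A / 2 * N g)) ∂μ) := by
        rw [lintegral_const_mul' _ _ (eexp_ne_top _)]
        gcongr
    _ = eexp (t ^ 2 * σ + C) * ∫⁻ g, eexp (-(U 0)) * eexp (-(A / 2 * N g)) ∂μ := by
        rw [lintegral_const_mul' _ _ (eexp_ne_top _), ← mul_assoc, ← mul_assoc, ← eexp_add,
          ← eexp_add]
        ring_nf
    _ ≤ eexp (t ^ 2 * σ + C) * tiltInt μ U v 0 := by
        rw [tiltInt_zero]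
        gcongr with g
        rw [← eexp_add]
        exact eexp_le_eexp (by linarith [(hU.bounds_of_even heven g).2])

variable [FiniteDimensional ℝ E] [BorelSpace E] [μ.IsAddHaarMeasure]

variable (μ) in
theorem measurePreserving_of_involutive {L : E →ₗ[ℝ] E} (hL : Function.Involutive L) :
    MeasurePreserving L μ μ := by
  have hdet : LinearMap.det L * LinearMap.det L = 1 := by
    rw [← LinearMap.det_comp, show L ∘ₗ L = LinearMap.id from LinearMap.ext hL, LinearMap.det_id]
  refine ⟨(LinearMap.continuous_of_finiteDimensional L).measurable, ?_⟩
  rw [Measure.map_linearMap_addHaar_eq_smul_addHaar μ (left_ne_zero_of_mul_eq_one hdet), abs_inv]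
  rcases mul_self_eq_one_iff.1 hdet with h | h <;> simp [h]

variable (μ) in
theorem lintegral_lintegral_rotation {Φ : E → E → ℝ≥0∞} (hΦ : Measurable (Function.uncurry Φ)) :
    ∫⁻ f, ∫⁻ g, Φ ((√2)⁻¹ • (f + g)) ((√2)⁻¹ • (f - g)) ∂μ ∂μ = ∫⁻ h, ∫⁻ k, Φ h k ∂μ ∂μ := by
  let L : E × E →ₗ[ℝ] E × E := (√2)⁻¹ • LinearMap.prod
    (LinearMap.fst ℝ E E + LinearMap.snd ℝ E E) (LinearMap.fst ℝ E E - LinearMap.snd ℝ E E)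
  have hL : Function.Involutive L := fun p => by
    have h2 : (√2 : ℝ)⁻¹ * ((√2)⁻¹ * 2) = 1 := by
      rw [← mul_assoc, ← mul_inv, Real.mul_self_sqrt zero_le_two, inv_mul_cancel₀ two_ne_zero]
    ext <;> simp [L, ← smul_add, ← smul_sub, smul_smul, h2, ← two_smul ℝ]
  have hmp := measurePreserving_of_involutive (μ.prod μ) hL
  calc _ = ∫⁻ p, Function.uncurry Φ (L p) ∂μ.prod μ :=
        (lintegral_prod _ (hΦ.comp hmp.measurable).aemeasurable).symm
    _ = ∫⁻ p, Function.uncurry Φ p ∂μ.prod μ := hmp.lintegral_comp hΦ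
    _ = _ := lintegral_prod _ hΦ.aemeasurable

theorem tiltInt_neg_of_even (hU : Function.Even U) (t : ℝ) :
    tiltInt μ U v (-t) = tiltInt μ U v t := by
  rw [tiltInt, ← lintegral_neg_eq_self]
  simp only [tiltInt, hU _, map_neg, neg_mul_neg]

theorem tiltInt_mul_tiltInt_neg (hU : Continuous U) (t : ℝ) :
    tiltInt μ U v t * tiltInt μ U v (-t) =
      ∫⁻ f, tiltInt μ (duplicatePotential U f) v (√2 * t) ∂μ := by
  have h2 : (√2 : ℝ)⁻¹ * 2 = √2 := by
    rw [inv_mul_eq_div, div_eq_iff (by positivity), Real.mul_self_sqrt zero_le_two]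
  calc tiltInt μ U v t * tiltInt μ U v (-t)
      = ∫⁻ h, ∫⁻ k, eexp (-(U h) + t * v h) * eexp (-(U k) + -t * v k) ∂μ ∂μ := by
        rw [tiltInt, ← lintegral_mul_const _ (by fun_prop)]
        exact lintegral_congr fun h => (lintegral_const_mul _ (by fun_prop)).symm
    _ = ∫⁻ f, tiltInt μ (duplicatePotential U f) v (√2 * t) ∂μ := by
        rw [← lintegral_lintegral_rotation μ (by unfold Function.uncurry; fun_prop)]
        refine lintegral_congr fun f => lintegral_congr fun g => ?_
        rw [← eexp_add, duplicatePotential]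
        congr 1
        simp only [map_smul, map_add, map_sub, smul_eq_mul]
        linear_combination (t * v g) * h2

theorem tiltInt_le_of_even_bound
    (H : ∀ W : E → ℝ, Pinched N a A W → Function.Even W → ∀ t,
      tiltInt μ W v t ≤ eexp (t ^ 2 * σ + D) * tiltInt μ W v 0)
    (hU : Pinched N a A U) (hsymm : ∀ t, tiltInt μ U v (-t) = tiltInt μ U v t) (t : ℝ) :
    tiltInt μ U v t ≤ eexp (t ^ 2 * σ + D / 2) * tiltInt μ U v 0 := by
  have hexp : (√2 * t) ^ 2 * σ + D = t ^ 2 * σ + D / 2 + (t ^ 2 * σ + D / 2) := by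
    rw [mul_pow, Real.sq_sqrt zero_le_two]
    ring
  have hsq : tiltInt μ U v t * tiltInt μ U v t ≤
      eexp (t ^ 2 * σ + D / 2) * tiltInt μ U v 0 * (eexp (t ^ 2 * σ + D / 2) * tiltInt μ U v 0) :=
    calc tiltInt μ U v t * tiltInt μ U v t
        = ∫⁻ f, tiltInt μ (duplicatePotential U f) v (√2 * t) ∂μ := by
          rw [← tiltInt_mul_tiltInt_neg hU.continuous, hsymm]
      _ ≤ ∫⁻ f, eexp ((√2 * t) ^ 2 * σ + D) * tiltInt μ (duplicatePotential U f) v 0 ∂μ :=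
          lintegral_mono fun f => H _ (hU.duplicate f) (even_duplicatePotential U f) _
      _ = eexp ((√2 * t) ^ 2 * σ + D) * (tiltInt μ U v 0 * tiltInt μ U v 0) := by
          have h0 := tiltInt_mul_tiltInt_neg (μ := μ) (v := v) hU.continuous 0
          rw [neg_zero, mul_zero] at h0
          rw [lintegral_const_mul' _ _ (eexp_ne_top _), h0]
      _ = _ := by
          rw [hexp, eexp_add]
          ring
  by_contra! hlt
  exact hsq.not_gt (ENNReal.mul_lt_mul hlt hlt)

theorem tiltInt_le_of_even_iterate (hσ : 0 < σ) (hv : ∀ g, v g ^ 2 ≤ σ * (a * N g))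
    (hC : ∫⁻ g, eexp (-(a / 4 * N g)) ∂μ ≤ eexp C * ∫⁻ g, eexp (-(A / 2 * N g)) ∂μ) (n : ℕ)
    (hU : Pinched N a A U) (heven : Function.Even U) (t : ℝ) :
    tiltInt μ U v t ≤ eexp (t ^ 2 * σ + C / 2 ^ n) * tiltInt μ U v 0 := by
  induction n generalizing U t with
  | zero => simpa using tiltInt_le_of_even hσ hv hC hU heven t
  | succ n ih =>
    rw [pow_succ (2 : ℝ) n, ← div_div]
    exact tiltInt_le_of_even_bound (fun _ => ih) hU (tiltInt_neg_of_even heven) t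

/-- A substitute for the Brascamp–Lieb inequality: each duplication halves the error of a crude
comparison with Gaussians, which therefore disappears in the limit. -/
theorem tiltInt_le_of_symm (hσ : 0 < σ) (hv : ∀ g, v g ^ 2 ≤ σ * (a * N g))
    (hN : ∫⁻ g, eexp (-(a / 4 * N g)) ∂μ ≠ ⊤) (hU : Pinched N a A U)
    (hsymm : ∀ t, tiltInt μ U v (-t) = tiltInt μ U v t) (t : ℝ) :
    tiltInt μ U v t ≤ eexp (t ^ 2 * σ) * tiltInt μ U v 0 := by
  have hNc := continuous_quadraticForm N
  have hpos : ∫⁻ g, eexp (-(A / 2 * N g)) ∂μ ≠ 0 := by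
    refine (lintegral_pos_iff_support (by fun_prop)).2 ?_ |>.ne'
    rw [Function.support_eq_univ fun g => (eexp_pos _).ne']
    exact NeZero.pos _
  obtain ⟨C, hC⟩ := exists_le_eexp_mul hN hpos
  have hn (n : ℕ) : tiltInt μ U v t ≤ eexp (t ^ 2 * σ + C / 2 ^ n / 2) * tiltInt μ U v 0 :=
    tiltInt_le_of_even_bound (fun _ => tiltInt_le_of_even_iterate hσ hv hC n) hU hsymm t
  have hlim : Filter.Tendsto (fun n : ℕ => t ^ 2 * σ + C / 2 ^ n / 2) Filter.atTop
      (nhds (t ^ 2 * σ)) := by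
    have hgeom := (tendsto_pow_atTop_nhds_zero_of_lt_one (r := (1 / 2 : ℝ)) (by norm_num)
      (by norm_num)).const_mul (C / 2) |>.const_add (t ^ 2 * σ)
    rw [mul_zero, add_zero] at hgeom
    refine hgeom.congr fun n => ?_
    rw [one_div, inv_pow]
    ring
  exact ge_of_tendsto' (ENNReal.Tendsto.mul_const ((continuous_eexp.tendsto _).comp hlim)
    (Or.inl (eexp_pos _).ne')) hn

end duplication

/-! ### The Dirichlet form of the two-dimensional torus -/

/-- The discrete torus of side `2 ^ n`. -/
abbrev Tor (n : ℕ) := ZMod (2 ^ n) × ZMod (2 ^ n)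

/-- The two positive lattice directions. -/
def step (i : Bool) : Z2 := if i then (1, 0) else (0, 1)

/-- Reduction of lattice points modulo `2 ^ n`. -/
def toTor (n : ℕ) : Z2 →+ Tor n :=
  (Int.castAddHom (ZMod (2 ^ n))).prodMap (Int.castAddHom (ZMod (2 ^ n)))

section torus
variable {n : ℕ}

/-- The discrete gradient across the edge of the torus leaving `e.1` in direction `e.2`. -/
def edgeDiff (e : Tor n × Bool) : (Tor n → ℝ) →L[ℝ] ℝ :=
  ContinuousLinearMap.proj (R := ℝ) (φ := fun _ : Tor n => ℝ) (e.1 + toTor n (step e.2)) -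
    ContinuousLinearMap.proj e.1

theorem edgeDiff_apply (e : Tor n × Bool) (h : Tor n → ℝ) :
    edgeDiff e h = h (e.1 + toTor n (step e.2)) - h e.1 := rfl

/-- The Dirichlet form `∑ (∇h)²` of the torus. -/
def dirichletForm (n : ℕ) : QuadraticForm ℝ (Tor n → ℝ) :=
  ∑ e : Tor n × Bool, QuadraticMap.sq.comp (edgeDiff e).toLinearMap

theorem dirichletForm_apply (h : Tor n → ℝ) : dirichletForm n h = ∑ e, edgeDiff e h ^ 2 := by
  simp [dirichletForm, sq]

theorem dirichletForm_nonneg (h : Tor n → ℝ) : 0 ≤ dirichletForm n h := by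
  rw [dirichletForm_apply]
  positivity

theorem sum_edgeDiff_sq_le_dirichletForm (h : Tor n → ℝ) (i : Bool) :
    ∑ t, edgeDiff (t, i) h ^ 2 ≤ dirichletForm n h := by
  rw [dirichletForm_apply, Fintype.sum_prod_type_right fun e => edgeDiff e h ^ 2]
  exact Finset.single_le_sum (f := fun i => ∑ t, edgeDiff (t, i) h ^ 2)
    (fun j _ => Finset.sum_nonneg fun t _ => sq_nonneg _) (Finset.mem_univ i)

/-- The spatial average over the torus. -/
def avg (n : ℕ) : (Tor n → ℝ) →L[ℝ] ℝ := (((2 : ℝ) ^ n) ^ 2)⁻¹ • ∑ t, ContinuousLinearMap.proj t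

/-- Reduction modulo `2 ^ n` of points with nonnegative coordinates, the offsets in a box. -/
def natToTor (n : ℕ) : ℕ × ℕ →+ Tor n :=
  (Nat.castAddMonoidHom (ZMod (2 ^ n))).prodMap (Nat.castAddMonoidHom (ZMod (2 ^ n)))

/-- The average of `h` over the box of side `L` with corner `x`. -/
def boxAvg (h : Tor n → ℝ) (L : ℕ) (x : Tor n) : ℝ :=
  ((L : ℝ) ^ 2)⁻¹ * ∑ p ∈ Finset.range L ×ˢ Finset.range L, h (x + natToTor n p)

theorem injOn_box {L : ℕ} (hL : L ≤ 2 ^ n) (x : Tor n) :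
    Set.InjOn (fun p => x + natToTor n p)
      (Finset.range L ×ˢ Finset.range L : Finset (ℕ × ℕ)) := by
  rintro ⟨i, j⟩ hp ⟨i', j'⟩ hp' h
  simp only [Finset.coe_product, Finset.coe_range, Set.mem_prod, Set.mem_Iio] at hp hp'
  have hcast {a b : ℕ} (ha : a < L) (hb : b < L) (hab : (a : ZMod (2 ^ n)) = b) : a = b := by
    rwa [ZMod.natCast_eq_natCast_iff', Nat.mod_eq_of_lt (ha.trans_le hL),
      Nat.mod_eq_of_lt (hb.trans_le hL)] at hab
  obtain ⟨h₁, h₂⟩ := Prod.mk.inj (add_left_cancel h)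
  rw [hcast hp.1 hp'.1 h₁, hcast hp.2 hp'.2 h₂]

theorem sum_box_le_sum {L : ℕ} (hL : L ≤ 2 ^ n) {f : Tor n → ℝ} (hf : ∀ t, 0 ≤ f t) (x : Tor n) :
    ∑ p ∈ Finset.range L ×ˢ Finset.range L, f (x + natToTor n p) ≤ ∑ t, f t := by
  rw [← Finset.sum_image (f := f) (injOn_box hL x)]
  exact Finset.sum_le_sum_of_subset_of_nonneg (Finset.subset_univ _) fun t _ _ => hf t

theorem boxAvg_add_nsmul_sub (h : Tor n → ℝ) (L : ℕ) (x v : Tor n) :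
    boxAvg h L (x + L • v) - boxAvg h L x =
      ∑ k ∈ Finset.range L, boxAvg (fun t => h (t + v) - h t) L (x + k • v) := by
  have htel (k : ℕ) : boxAvg (fun t => h (t + v) - h t) L (x + k • v) =
      boxAvg h L (x + (k + 1) • v) - boxAvg h L (x + k • v) := by
    simp only [boxAvg, ← mul_sub, ← Finset.sum_sub_distrib, succ_nsmul]
    congr! 4
    abel
  simp_rw [htel]
  rw [Finset.sum_range_sub fun k => boxAvg h L (x + k • v), zero_smul, add_zero]

theorem boxAvg_sq_le {L : ℕ} (hL : L ≤ 2 ^ n) (f : Tor n → ℝ) (x : Tor n) :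
    boxAvg f L x ^ 2 ≤ ((L : ℝ) ^ 2)⁻¹ * ∑ t, f t ^ 2 := by
  have hcs := sq_sum_le_card_mul_sum_sq (s := Finset.range L ×ˢ Finset.range L)
    (f := fun p => f (x + natToTor n p))
  have hsum := sum_box_le_sum hL (fun t => sq_nonneg (f t)) x
  rw [Finset.card_product, Finset.card_range, Nat.cast_mul, ← sq] at hcs
  rw [boxAvg, mul_pow]
  calc (((L : ℝ) ^ 2)⁻¹) ^ 2 * (∑ p ∈ Finset.range L ×ˢ Finset.range L,
        f (x + natToTor n p)) ^ 2
    _ ≤ (((L : ℝ) ^ 2)⁻¹) ^ 2 * ((L : ℝ) ^ 2 * ∑ t, f t ^ 2) := by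
      gcongr
      exact hcs.trans (by gcongr)
    _ = ((L : ℝ) ^ 2)⁻¹ * ∑ t, f t ^ 2 := by
      rcases eq_or_ne (L : ℝ) 0 with h0 | h0
      · simp [h0]
      · field_simp

/-- The `L` unit shifts contribute a factor `L`, the average over `L²` sites a factor `L⁻¹`:
that they cancel is where dimension two enters. -/
theorem boxAvg_shift_sq_le (h : Tor n → ℝ) {L : ℕ} (hL : L ≤ 2 ^ n) (x v : Tor n) :
    (boxAvg h L (x + L • v) - boxAvg h L x) ^ 2 ≤ ∑ t, (h (t + v) - h t) ^ 2 := by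
  have hE : 0 ≤ ∑ t, (h (t + v) - h t) ^ 2 := by positivity
  rw [boxAvg_add_nsmul_sub]
  calc (∑ k ∈ Finset.range L, boxAvg (fun t => h (t + v) - h t) L (x + k • v)) ^ 2
    _ ≤ L * ∑ k ∈ Finset.range L, boxAvg (fun t => h (t + v) - h t) L (x + k • v) ^ 2 := by
      simpa using sq_sum_le_card_mul_sum_sq (s := Finset.range L)
        (f := fun k => boxAvg (fun t => h (t + v) - h t) L (x + k • v))
    _ ≤ L * ∑ k ∈ Finset.range L, ((L : ℝ) ^ 2)⁻¹ * ∑ t, (h (t + v) - h t) ^ 2 := by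
      gcongr with k
      exact boxAvg_sq_le hL _ _
    _ ≤ ∑ t, (h (t + v) - h t) ^ 2 := by
      rcases eq_or_ne (L : ℝ) 0 with h0 | h0
      · simpa [h0] using hE
      · simp only [Finset.sum_const, Finset.card_range, nsmul_eq_mul]
        field_simp
        rfl

theorem abs_boxAvg_shift_le (h : Tor n → ℝ) {L : ℕ} (hL : L ≤ 2 ^ n) (x : Tor n) (i : Bool) :
    |boxAvg h L (x + L • toTor n (step i)) - boxAvg h L x| ≤ √(dirichletForm n h) :=
  Real.abs_le_sqrt <|
    (boxAvg_shift_sq_le h hL x _).trans (sum_edgeDiff_sq_le_dirichletForm h i)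

theorem boxAvg_add_self (h : Tor n → ℝ) (L : ℕ) (x : Tor n) :
    boxAvg h (L + L) x = (boxAvg h L x + boxAvg h L (x + L • toTor n (step true)) +
      boxAvg h L (x + L • toTor n (step false)) +
      boxAvg h L (x + L • toTor n (step true) + L • toTor n (step false))) / 4 := by
  have htrue (y : Tor n) (a b : ℕ) :
      y + natToTor n (L + a, b) = y + L • toTor n (step true) + natToTor n (a, b) := by
    ext <;> simp [step, toTor, natToTor, add_assoc]
  have hfalse (y : Tor n) (a b : ℕ) :
      y + natToTor n (a, L + b) = y + L • toTor n (step false) + natToTor n (a, b) := by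
    ext <;> simp [step, toTor, natToTor, add_assoc]
  simp only [boxAvg, Finset.sum_product, Finset.sum_range_add, Finset.sum_add_distrib,
    htrue, hfalse, Nat.cast_add]
  ring_nf

theorem abs_boxAvg_add_self_sub_le (h : Tor n → ℝ) {L : ℕ} (hL : L ≤ 2 ^ n) (x : Tor n) :
    |boxAvg h (L + L) x - boxAvg h L x| ≤ √(dirichletForm n h) := by
  have h₁ := abs_le.1 (abs_boxAvg_shift_le h hL x true)
  have h₂ := abs_le.1 (abs_boxAvg_shift_le h hL x false)
  have h₃ := abs_le.1 (abs_boxAvg_shift_le h hL (x + L • toTor n (step true)) false)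
  rw [boxAvg_add_self, abs_le]
  constructor <;> linarith [h₁.1, h₁.2, h₂.1, h₂.2, h₃.1, h₃.2]

theorem abs_boxAvg_two_pow_sub_le (h : Tor n → ℝ) (x : Tor n) {m : ℕ} (hm : m ≤ n) :
    |boxAvg h (2 ^ m) x - h x| ≤ m * √(dirichletForm n h) := by
  induction m with
  | zero => simp [boxAvg, show ((0, 0) : ℕ × ℕ) = 0 from rfl]
  | succ m ih =>
    have hstep := abs_boxAvg_add_self_sub_le h (L := 2 ^ m)
      (Nat.pow_le_pow_right (by norm_num) (by lia)) x
    rw [← two_mul, ← pow_succ'] at hstep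
    push_cast
    linarith [abs_sub_le (boxAvg h (2 ^ (m + 1)) x) (boxAvg h (2 ^ m) x) (h x), ih (by lia)]

theorem boxAvg_full (h : Tor n → ℝ) (x : Tor n) : boxAvg h (2 ^ n) x = avg n h := by
  have himage : (Finset.range (2 ^ n) ×ˢ Finset.range (2 ^ n)).image
      (fun p => x + natToTor n p) = Finset.univ := by
    apply Finset.eq_univ_of_card
    rw [Finset.card_image_of_injOn (injOn_box le_rfl x)]
    simp [ZMod.card]
  simp only [boxAvg, avg, smul_apply, sum_apply,
    ContinuousLinearMap.proj_apply, smul_eq_mul, ← himage, Finset.sum_image (injOn_box le_rfl x)]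
  push_cast
  rfl

/-- The deviation of the value at `x` from the spatial average. -/
def dev (x : Tor n) : (Tor n → ℝ) →L[ℝ] ℝ := ContinuousLinearMap.proj x - avg n

theorem dev_apply (x : Tor n) (h : Tor n → ℝ) : dev x h = h x - avg n h := rfl

theorem dev_sq_le (x : Tor n) (h : Tor n → ℝ) : dev x h ^ 2 ≤ n ^ 2 * dirichletForm n h := by
  have hbox := abs_boxAvg_two_pow_sub_le h x le_rfl
  rw [boxAvg_full, abs_sub_comm] at hbox
  calc dev x h ^ 2 = |h x - avg n h| ^ 2 := (sq_abs _).symm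
    _ ≤ (n * √(dirichletForm n h)) ^ 2 := by gcongr
    _ = n ^ 2 * dirichletForm n h := by rw [mul_pow, Real.sq_sqrt (dirichletForm_nonneg h)]

theorem avg_comp_equiv (σ : Tor n ≃ Tor n) (h : Tor n → ℝ) :
    avg n (fun t => h (σ t)) = avg n h := by
  simp [avg, Equiv.sum_comp σ h]

theorem avg_one : avg n 1 = 1 := by
  simp [avg, ZMod.card]
  field_simp

end torus

/-! ### Height differences on the pinned torus -/

section potential

variable {V : ℝ → ℝ} {a A : ℝ}

theorem convexOn_of_strongConvexOn (ha : 0 ≤ a) (hlb : StrongConvexOn Set.univ a V) :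
    ConvexOn ℝ Set.univ V := strongConvexOn_zero.1 (hlb.mono ha)

theorem pinched_of_strongConvexOn (ha : 0 ≤ a) (hlb : StrongConvexOn Set.univ a V)
    (hub : StrongConcaveOn Set.univ (-A) V) : Pinched QuadraticMap.sq a A V := by
  have hmid (x d : ℝ) : 1 / 2 * (x + d) + 1 / 2 * (x - d) = x := by ring
  have hnorm (x d : ℝ) : ‖x + d - (x - d)‖ ^ 2 = 4 * d ^ 2 := by
    rw [Real.norm_eq_abs, sq_abs]; ring
  refine ⟨continuous_of_convexOn_univ (convexOn_of_strongConvexOn ha hlb), fun x d => ?_,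
    fun x d => ?_⟩
  · have h := hlb.2 (Set.mem_univ (x + d)) (Set.mem_univ (x - d))
      one_half_pos.le one_half_pos.le (add_halves 1)
    simp only [smul_eq_mul, hmid, hnorm, QuadraticMap.sq_apply] at h ⊢
    linarith
  · have h := hub.2 (Set.mem_univ (x + d)) (Set.mem_univ (x - d))
      one_half_pos.le one_half_pos.le (add_halves 1)
    simp only [smul_eq_mul, hmid, hnorm, QuadraticMap.sq_apply] at h ⊢
    linarith

theorem pinched_const_mul_sq (haA : a ≤ A) :
    Pinched QuadraticMap.sq a A fun x => a / 2 * x ^ 2 where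
  continuous := by fun_prop
  lower f g := by
    rw [QuadraticMap.sq_apply]
    linarith
  upper f g := by
    rw [QuadraticMap.sq_apply]
    nlinarith [mul_le_mul_of_nonneg_right haA (mul_self_nonneg g)]

theorem Pinched.le_of_sq (hV : Pinched QuadraticMap.sq a A V) : a ≤ A := by
  simpa using (hV.lower 0 1).trans (hV.upper 0 1)

theorem exists_sq_sub_le (ha : 0 < a) (hlb : StrongConvexOn Set.univ a V) (c : ℝ) :
    ∃ C, ∀ d, a / 4 * d ^ 2 - C ≤ V (d + c) := by
  have hconv : ConvexOn ℝ Set.univ fun x => V x - a / 2 * x ^ 2 := by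
    simpa using strongConvexOn_iff_convex.1 hlb
  obtain ⟨k, l, hkl⟩ := hconv.exists_affine_le_real isClosed_univ
    ((continuous_of_convexOn_univ hconv).lowerSemicontinuous.lowerSemicontinuousOn _)
  refine ⟨(a * c + k) ^ 2 / a - a / 2 * c ^ 2 - k * c - l, fun d => ?_⟩
  have hsq : 0 ≤ a / 4 * d ^ 2 + (a * c + k) * d + (a * c + k) ^ 2 / a := by
    have : 0 ≤ (a / 2 * d + (a * c + k)) ^ 2 / a := by positivity
    calc 0 ≤ (a / 2 * d + (a * c + k)) ^ 2 / a := this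
      _ = _ := by field_simp; ring
  linarith [hkl (d + c) (Set.mem_univ _)]

end potential

section gaussian

theorem lintegral_eexp_neg_mul_sq_ne_top {c : ℝ} (hc : 0 < c) :
    ∫⁻ x : ℝ, eexp (-(c * x ^ 2)) ≠ ⊤ := by
  have h := (integrable_exp_neg_mul_sq hc).lintegral_lt_top
  simpa only [neg_mul, eexp] using h.ne

theorem lintegral_eexp_ne_zero {α : Type*} [MeasurableSpace α] {μ : Measure α} [NeZero μ]
    {f : α → ℝ} (hf : Measurable f) : ∫⁻ x, eexp (f x) ∂μ ≠ 0 := by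
  rw [Ne, lintegral_eq_zero_iff (by fun_prop)]
  intro h
  obtain ⟨x, hx⟩ := h.exists
  exact (eexp_pos _).ne' hx

theorem lintegral_eexp_neg_quadraticForm_ne_top {ι : Type*} [Fintype ι]
    {N : QuadraticForm ℝ (ι → ℝ)} {K : ℝ} (hK : 0 < K) (hN : ∀ g, ∑ i, g i ^ 2 ≤ K * N g) {c : ℝ}
    (hc : 0 < c) : ∫⁻ g, eexp (-(c * N g)) ≠ ⊤ := by
  have hint : Integrable fun g : ι → ℝ => ∏ i, Real.exp (-(c / K) * g i ^ 2) :=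
    Integrable.fintype_prod fun _ => integrable_exp_neg_mul_sq (by positivity)
  refine ne_top_of_le_ne_top hint.lintegral_lt_top.ne (lintegral_mono fun g => ?_)
  rw [← Real.exp_sum, ← Finset.mul_sum]
  refine eexp_le_eexp ?_
  rw [neg_mul, neg_le_neg_iff, div_mul_eq_mul_div, div_le_iff₀ hK, mul_assoc, mul_comm (N g)]
  gcongr
  exact hN g

/-- Multiply by `∫ w`, recentre it at `m h` and translate `h` along `e`: this exchanges the roles of
`l` and `m`. -/
theorem lintegral_mul_comp_eq_of_translation_invariant {E : Type*} [NormedAddCommGroup E]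
    [NormedSpace ℝ E] [MeasurableSpace E] [BorelSpace E] [FiniteDimensional ℝ E] (μ : Measure E)
    [μ.IsAddHaarMeasure] {G : E → ℝ≥0∞} (hG : Measurable G) {e : E}
    (hGe : ∀ h (c : ℝ), G (h + c • e) = G h) {l m : E →L[ℝ] ℝ} (hl : l e = 1) (hm : m e = 1)
    {w : ℝ → ℝ≥0∞} (hw : Measurable w) (hw0 : ∫⁻ t, w t ≠ 0) (hw1 : ∫⁻ t, w t ≠ ⊤) :
    ∫⁻ h, G h * w (l h) ∂μ = ∫⁻ h, G h * w (m h) ∂μ := by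
  refine (ENNReal.mul_left_inj hw0 hw1).1 ?_
  calc (∫⁻ h, G h * w (l h) ∂μ) * ∫⁻ t, w t
      = ∫⁻ h, (∫⁻ t, G h * w (l h) * w (t + m h)) ∂μ := by
        rw [← lintegral_mul_const _ (by fun_prop)]
        refine lintegral_congr fun h => ?_
        rw [lintegral_const_mul _ (by fun_prop), lintegral_add_right_eq_self]
    _ = ∫⁻ t, ∫⁻ h, G h * w (l h) * w (t + m h) ∂μ ∂volume :=
        lintegral_lintegral_swap (by unfold Function.uncurry; fun_prop)
    _ = ∫⁻ t, ∫⁻ h, G h * w (m h) * w (l h - t) ∂μ ∂volume := by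
        refine lintegral_congr fun t => ?_
        rw [← lintegral_add_right_eq_self (μ := μ) _ ((-t) • e)]
        refine lintegral_congr fun h => ?_
        simp only [hGe, map_add, map_smul, hl, hm, smul_eq_mul, mul_one, ← sub_eq_add_neg]
        rw [add_sub_cancel, mul_right_comm]
    _ = ∫⁻ h, (∫⁻ t, G h * w (m h) * w (l h - t)) ∂μ :=
        lintegral_lintegral_swap (by unfold Function.uncurry; fun_prop)
    _ = (∫⁻ h, G h * w (m h) ∂μ) * ∫⁻ t, w t := by
        rw [← lintegral_mul_const _ (by fun_prop)]
        refine lintegral_congr fun h => ?_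
        rw [lintegral_const_mul _ (by fun_prop), lintegral_sub_left_eq_self]

end gaussian

section pinned

variable {n : ℕ} {V : ℝ → ℝ} {a A : ℝ} {ℓ : Z2 →+ ℝ}

/-- The Hamiltonian on the torus with potential `V` and mean slope `ℓ`. -/
def torH (V : ℝ → ℝ) (ℓ : Z2 →+ ℝ) (h : Tor n → ℝ) : ℝ :=
  ∑ e, V (edgeDiff e h + ℓ (step e.2))

/-- The torus Hamiltonian with a Gaussian pin at the site `o`, which makes the partition function
finite. -/
def pinnedH (V : ℝ → ℝ) (ℓ : Z2 →+ ℝ) (a : ℝ) (o : Tor n) (h : Tor n → ℝ) : ℝ :=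
  torH V ℓ h + a / 2 * h o ^ 2

/-- The quadratic form of the Gaussian torus field pinned at `o`. -/
def pinnedForm (o : Tor n) : QuadraticForm ℝ (Tor n → ℝ) :=
  dirichletForm n + QuadraticMap.sq.comp (LinearMap.proj o)

theorem pinnedForm_apply (o : Tor n) (h : Tor n → ℝ) :
    pinnedForm o h = dirichletForm n h + h o ^ 2 := by
  simp [pinnedForm, sq]

theorem pinched_pinnedH (hV : Pinched QuadraticMap.sq a A V) (o : Tor n) :
    Pinched (pinnedForm o) a A (pinnedH V ℓ a o) := by
  have hpin := (pinched_const_mul_sq hV.le_of_sq).comp_linear_add_const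
    (ContinuousLinearMap.proj (R := ℝ) (φ := fun _ : Tor n => ℝ) o) 0
  simp only [add_zero] at hpin
  exact (Pinched.sum _ fun e _ => hV.comp_linear_add_const (edgeDiff e) _).add hpin

theorem sq_le_pinnedForm (o x : Tor n) (h : Tor n → ℝ) :
    h x ^ 2 ≤ 3 * (2 * n ^ 2 + 1) * pinnedForm o h := by
  have hx : h x = dev x h - dev o h + h o := by simp only [dev_apply]; ring
  have hD := dirichletForm_nonneg h
  rw [hx, pinnedForm_apply]
  nlinarith [dev_sq_le x h, dev_sq_le o h, sq_nonneg (dev x h + dev o h), sq_nonneg (h o),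
    sq_nonneg (dev x h - h o), sq_nonneg (dev o h + h o), mul_nonneg (sq_nonneg (n : ℝ))
    (sq_nonneg (h o))]

theorem lintegral_eexp_neg_pinnedForm_ne_top (o : Tor n) {c : ℝ} (hc : 0 < c) :
    ∫⁻ g, eexp (-(c * pinnedForm o g)) ≠ ⊤ := by
  refine lintegral_eexp_neg_quadraticForm_ne_top
    (K := Fintype.card (Tor n) * (3 * (2 * n ^ 2 + 1))) (by positivity) (fun g => ?_) hc
  rw [mul_assoc, ← nsmul_eq_mul]
  exact Finset.sum_le_card_nsmul _ _ _ fun x _ => sq_le_pinnedForm o x g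

/-- The reflection `h ↦ -h (2 x - ·)`, which preserves all gradients. -/
def reflect (x : Tor n) : (Tor n → ℝ) →ₗ[ℝ] Tor n → ℝ :=
  -LinearMap.funLeft ℝ ℝ fun t => x + x - t

theorem reflect_apply (x t : Tor n) (h : Tor n → ℝ) : reflect x h t = -h (x + x - t) := rfl

theorem involutive_reflect (x : Tor n) : Function.Involutive (reflect x) := fun h => by
  ext t
  simp [reflect_apply]

theorem torH_reflect (x : Tor n) (h : Tor n → ℝ) : torH V ℓ (reflect x h) = torH V ℓ h := by
  have hdiff (t : Tor n) (i : Bool) :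
      edgeDiff (t, i) (reflect x h) = edgeDiff (x + x - toTor n (step i) - t, i) h := by
    simp only [edgeDiff_apply, reflect_apply]
    rw [show x + x - toTor n (step i) - t + toTor n (step i) = x + x - t by abel,
      show x + x - (t + toTor n (step i)) = x + x - toTor n (step i) - t by abel]
    ring
  simp only [torH, Fintype.sum_prod_type_right (α₁ := Tor n), hdiff]
  exact Finset.sum_congr rfl fun i _ =>
    (Equiv.subLeft (x + x - toTor n (step i))).sum_comp fun t => V (edgeDiff (t, i) h + ℓ (step i))

theorem dev_reflect (x : Tor n) (h : Tor n → ℝ) : dev x (reflect x h) = -dev x h := by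
  have havg : avg n (reflect x h) = -avg n h := by
    rw [← avg_comp_equiv (Equiv.subLeft (x + x)) h, ← map_neg]
    rfl
  rw [dev_apply, havg, reflect_apply, add_sub_cancel_right, dev_apply]
  ring

theorem tiltInt_pinnedH_neg (ha : 0 < a) (hV : Continuous V) (o x : Tor n) (t : ℝ) :
    tiltInt volume (pinnedH V ℓ a o) (dev x) (-t) = tiltInt volume (pinnedH V ℓ a o) (dev x) t := by
  let w : ℝ → ℝ≥0∞ := fun y => eexp (-(a / 2 * y ^ 2))
  let G : ℝ → (Tor n → ℝ) → ℝ≥0∞ := fun s h => eexp (-(torH V ℓ h) + s * dev x h)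
  have hG (s : ℝ) : Measurable (G s) := by
    unfold G torH
    fun_prop
  have hsplit (s : ℝ) : tiltInt volume (pinnedH V ℓ a o) (dev x) s = ∫⁻ h, G s h * w (h o) := by
    refine lintegral_congr fun h => ?_
    simp only [G, w, ← eexp_add, pinnedH]
    ring_nf
  calc tiltInt volume (pinnedH V ℓ a o) (dev x) (-t)
      = ∫⁻ h, G (-t) (reflect x h) * w (reflect x h o) := by
        rw [hsplit]
        exact ((measurePreserving_of_involutive volume (involutive_reflect x)).lintegral_comp
          (by fun_prop)).symm
    _ = ∫⁻ h, G t h * w (h (x + x - o)) := by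
        simp only [G, w, torH_reflect, dev_reflect, reflect_apply, neg_mul_neg, neg_sq]
    _ = ∫⁻ h, G t h * w (h o) := by
        refine lintegral_mul_comp_eq_of_translation_invariant volume (hG t) (e := 1) ?_
          (l := ContinuousLinearMap.proj (x + x - o)) (m := ContinuousLinearMap.proj o) rfl rfl
          (by fun_prop) (lintegral_eexp_ne_zero (by fun_prop))
          (lintegral_eexp_neg_mul_sq_ne_top (half_pos ha))
        intro h c
        simp [G, torH, edgeDiff_apply, dev_apply, avg_one]
    _ = tiltInt volume (pinnedH V ℓ a o) (dev x) t := (hsplit t).symm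

theorem tiltInt_pinnedH_le (ha : 0 < a) (hV : Pinched QuadraticMap.sq a A V) (o x : Tor n) (t : ℝ) :
    tiltInt volume (pinnedH V ℓ a o) (dev x) t ≤
      eexp (t ^ 2 * ((n + 1) ^ 2 / a)) * ∫⁻ h, eexp (-(pinnedH V ℓ a o h)) := by
  rw [← tiltInt_zero (v := dev x)]
  refine tiltInt_le_of_symm (by positivity) (fun g => ?_)
    (lintegral_eexp_neg_pinnedForm_ne_top o (by positivity)) (pinched_pinnedH hV o)
    (tiltInt_pinnedH_neg ha hV.continuous o x) t
  have hD := dirichletForm_nonneg g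
  calc dev x g ^ 2 ≤ n ^ 2 * dirichletForm n g := dev_sq_le x g
    _ ≤ (n + 1) ^ 2 * pinnedForm o g := by
      rw [pinnedForm_apply]
      gcongr <;> linarith [sq_nonneg (g o)]
    _ = (n + 1) ^ 2 / a * (a * pinnedForm o g) := by field_simp

theorem eexp_add_le_eexp_two_mul (x y : ℝ) : eexp (x + y) ≤ eexp (2 * x) + eexp (2 * y) := by
  rcases le_total x y with h | h
  · exact (eexp_le_eexp (by linarith)).trans le_add_self
  · exact (eexp_le_eexp (by linarith)).trans le_self_add

theorem lintegral_eexp_sub_pinnedH_le (ha : 0 < a) (hV : Pinched QuadraticMap.sq a A V)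
    (o x y : Tor n) (s : ℝ) :
    ∫⁻ h, eexp (s * (h x - h y)) * eexp (-(pinnedH V ℓ a o h)) ≤
      2 * eexp (4 * s ^ 2 * ((n + 1) ^ 2 / a)) * ∫⁻ h, eexp (-(pinnedH V ℓ a o h)) := by
  have hU := (pinched_pinnedH (ℓ := ℓ) hV o).continuous
  calc ∫⁻ h, eexp (s * (h x - h y)) * eexp (-(pinnedH V ℓ a o h))
    _ ≤ ∫⁻ h, (eexp (-(pinnedH V ℓ a o h) + 2 * s * dev x h) +
          eexp (-(pinnedH V ℓ a o h) + -(2 * s) * dev y h)) := by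
      refine lintegral_mono fun h => ?_
      rw [eexp_add, eexp_add, ← mul_add, mul_comm]
      gcongr
      calc eexp (s * (h x - h y)) = eexp (s * dev x h + -s * dev y h) := by
            simp only [dev_apply]
            ring_nf
        _ ≤ eexp (2 * s * dev x h) + eexp (-(2 * s) * dev y h) := by
            refine (eexp_add_le_eexp_two_mul _ _).trans_eq ?_
            ring_nf
    _ = tiltInt volume (pinnedH V ℓ a o) (dev x) (2 * s) +
          tiltInt volume (pinnedH V ℓ a o) (dev y) (-(2 * s)) := lintegral_add_left (by fun_prop) _
    _ ≤ 2 * eexp (4 * s ^ 2 * ((n + 1) ^ 2 / a)) * ∫⁻ h, eexp (-(pinnedH V ℓ a o h)) := by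
      refine (add_le_add (tiltInt_pinnedH_le ha hV o x _) (tiltInt_pinnedH_le ha hV o y _)).trans_eq
        ?_
      rw [neg_sq, ← two_mul, mul_assoc 2, mul_pow]
      norm_num

theorem lintegral_eexp_neg_pinnedH_ne_zero (hV : Continuous V) (o : Tor n) :
    ∫⁻ h, eexp (-(pinnedH V ℓ a o h)) ≠ 0 := by
  refine lintegral_eexp_ne_zero ?_
  unfold pinnedH torH
  fun_prop

theorem exists_pinnedForm_sub_le_pinnedH (ha : 0 < a) (hlb : StrongConvexOn Set.univ a V)
    (ℓ : Z2 →+ ℝ) (o : Tor n) : ∃ C, ∀ h, a / 4 * pinnedForm o h - C ≤ pinnedH V ℓ a o h := by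
  choose C hC using exists_sq_sub_le ha hlb
  refine ⟨∑ e : Tor n × Bool, C (ℓ (step e.2)), fun h => ?_⟩
  have hsum : a / 4 * dirichletForm n h - ∑ e : Tor n × Bool, C (ℓ (step e.2)) ≤ torH V ℓ h := by
    rw [dirichletForm_apply, Finset.mul_sum, ← Finset.sum_sub_distrib]
    exact Finset.sum_le_sum fun e _ => hC _ _
  rw [pinnedForm_apply, pinnedH]
  nlinarith [mul_nonneg ha.le (sq_nonneg (h o))]

theorem lintegral_eexp_neg_pinnedH_ne_top (ha : 0 < a) (hlb : StrongConvexOn Set.univ a V)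
    (o : Tor n) : ∫⁻ h, eexp (-(pinnedH V ℓ a o h)) ≠ ⊤ := by
  obtain ⟨C, hC⟩ := exists_pinnedForm_sub_le_pinnedH ha hlb ℓ o
  refine ne_top_of_le_ne_top (ENNReal.mul_ne_top (eexp_ne_top C)
    (lintegral_eexp_neg_pinnedForm_ne_top o (show 0 < a / 4 by positivity))) ?_
  rw [← lintegral_const_mul' _ _ (eexp_ne_top C)]
  refine lintegral_mono fun h => ?_
  rw [← eexp_add]
  exact eexp_le_eexp (by linarith [hC h])

end pinned

/-! ### The spatial Markov property -/

section embedding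
variable {n : ℕ} {F : Finset Z2}

/-- `F` together with its boundary embeds into the torus. -/
def Embeds (n : ℕ) (F : Finset Z2) : Prop :=
  Set.InjOn (toTor n) ((F : Set Z2) ∪ bdry (F : Set Z2))

theorem Embeds.notMem_image (hF : Embeds n F) {y : Z2} (hy : y ∈ bdry (F : Set Z2)) :
    toTor n y ∉ F.image (toTor n) := by
  intro h
  obtain ⟨x, hx, hxy⟩ := Finset.mem_image.1 h
  exact hy.1 (hF (Or.inl hx) (Or.inr hy) hxy ▸ hx)

/-- The bijection between `F` and its image in the torus. -/
def Embeds.equiv (hF : Embeds n F) : ↥F ≃ ↥(F.image (toTor n)) :=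
  Equiv.ofBijective (fun x => ⟨toTor n x, Finset.mem_image_of_mem _ x.2⟩)
    ⟨fun x y hxy => Subtype.ext (hF (Or.inl x.2) (Or.inl y.2) (congrArg Subtype.val hxy)),
      fun ⟨_, ht⟩ =>
        let ⟨x, hx, hxt⟩ := Finset.mem_image.1 ht
        ⟨⟨x, hx⟩, Subtype.ext hxt⟩⟩

/-- The torus configuration equal to the tilt-corrected field `h - ℓ` on the image of `F` and
to `k` elsewhere. -/
def glue (hF : Embeds n F) (ℓ : Z2 →+ ℝ) (k : Tor n → ℝ) (h : ↥F → ℝ) : Tor n → ℝ :=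
  Function.updateFinset k (F.image (toTor n)) fun t =>
    h (hF.equiv.symm t) - ℓ (hF.equiv.symm t)

/-- The boundary condition induced on `F` by a torus configuration. -/
def bcOf (ℓ : Z2 →+ ℝ) (k : Tor n → ℝ) (y : Z2) : ℝ := k (toTor n y) + ℓ y

variable (hF : Embeds n F) (ℓ : Z2 →+ ℝ) (k : Tor n → ℝ)

theorem glue_of_mem (h : ↥F → ℝ) (x : ↥F) : glue hF ℓ k h (toTor n x) = h x - ℓ x := by
  have hm : toTor n x ∈ F.image (toTor n) := Finset.mem_image_of_mem _ x.2
  have hx : hF.equiv.symm ⟨toTor n x, hm⟩ = x := (Equiv.symm_apply_eq _).2 rfl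
  simp only [glue, Function.updateFinset, hm, dite_true, hx]

theorem glue_of_notMem (h : ↥F → ℝ) {t : Tor n} (ht : t ∉ F.image (toTor n)) :
    glue hF ℓ k h t = k t := by
  simp only [glue, Function.updateFinset, ht, dite_false]

theorem measurable_glue : Measurable (glue hF ℓ k) := by
  refine measurable_pi_lambda _ fun t => ?_
  by_cases ht : t ∈ F.image (toTor n)
  · simp only [glue, Function.updateFinset, ht, dite_true]
    fun_prop
  · simp only [glue, Function.updateFinset, ht, dite_false]
    fun_prop

theorem lmarginal_eq_lintegral_glue (f : (Tor n → ℝ) → ℝ≥0∞) :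
    (∫⋯∫⁻_F.image (toTor n), f ∂(fun _ => volume)) k = ∫⁻ h : ↥F → ℝ, f (glue hF ℓ k h) := by
  have e := volume_measurePreserving_piCongrLeft (fun _ : ↥(F.image (toTor n)) => ℝ) hF.equiv
  rw [lmarginal, ← volume_pi, ← e.lintegral_comp_emb (MeasurableEquiv.measurableEmbedding _),
    ← lintegral_sub_right_eq_self _ fun x : ↥F => ℓ x]
  refine lintegral_congr fun h => congrArg (fun w => f (Function.updateFinset k _ w)) ?_
  ext t
  obtain ⟨x, rfl⟩ := hF.equiv.surjective t
  rw [MeasurableEquiv.coe_piCongrLeft, Equiv.piCongrLeft_apply_apply]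
  simp

theorem vee_bcOf (h : ↥F → ℝ) {y : Z2} (hy : y ∈ F ∨ y ∈ bdry (F : Set Z2)) :
    vee F h (bcOf ℓ k) y = glue hF ℓ k h (toTor n y) + ℓ y := by
  by_cases hyF : y ∈ F
  · simp [vee, hyF, glue_of_mem hF ℓ k h ⟨y, hyF⟩]
  · simp [vee, hyF, bcOf, glue_of_notMem hF ℓ k h (hF.notMem_image (hy.resolve_left hyF))]

theorem mem_edgesOf_iff {D : Set Z2} {b : Z2 × Z2} :
    b ∈ edgesOf D ↔ ∃ z i, b = (z, z + step i) ∧ (z ∈ D ∨ z + step i ∈ D) := by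
  constructor
  · rintro ⟨hb | hb, hD⟩
    · exact ⟨b.1, true, Prod.ext rfl hb, hb ▸ hD⟩
    · exact ⟨b.1, false, Prod.ext rfl hb, hb ▸ hD⟩
  · rintro ⟨z, _ | _, rfl, hD⟩
    exacts [⟨Or.inr rfl, hD⟩, ⟨Or.inl rfl, hD⟩]

/-- The torus edge under a positively oriented edge of `ℤ²`. -/
def edgeTo (n : ℕ) (b : Z2 × Z2) : Tor n × Bool := (toTor n b.1, decide (b.2 = b.1 + step true))

theorem edgeTo_add_step (z : Z2) (i : Bool) : edgeTo n (z, z + step i) = (toTor n z, i) := by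
  cases i <;> simp [edgeTo, step]

variable {hF ℓ k} in
theorem grad_vee_bcOf (h : ↥F → ℝ) {b : Z2 × Z2} (hb : b ∈ edgesOf (F : Set Z2)) :
    grad (vee F h (bcOf ℓ k)) b =
      edgeDiff (edgeTo n b) (glue hF ℓ k h) + ℓ (step (edgeTo n b).2) := by
  obtain ⟨h₁, h₂⟩ := mem_or_mem_bdry_of_mem_edgesOf hb
  rw [grad, vee_bcOf hF ℓ k h h₁, vee_bcOf hF ℓ k h h₂]
  obtain ⟨z, i, rfl, -⟩ := mem_edgesOf_iff.1 hb
  rw [edgeTo_add_step, edgeDiff_apply, map_add, map_add]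
  ring

theorem Embeds.injOn_edgeTo (hF : Embeds n F) :
    Set.InjOn (edgeTo n) (edgesOf (F : Set Z2)) := by
  intro b hb b' hb' heq
  have h₁ := (mem_or_mem_bdry_of_mem_edgesOf hb).1
  have h₁' := (mem_or_mem_bdry_of_mem_edgesOf hb').1
  obtain ⟨z, i, rfl, -⟩ := mem_edgesOf_iff.1 hb
  obtain ⟨z', i', rfl, -⟩ := mem_edgesOf_iff.1 hb'
  obtain ⟨hz, rfl⟩ := Prod.mk.inj ((edgeTo_add_step z i).symm.trans (heq.trans
    (edgeTo_add_step z' i')))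
  have hzz : z = z' := hF h₁ h₁' hz
  rw [hzz]

theorem edgeDiff_glue_of_notMem (h : ↥F → ℝ) {e : Tor n × Bool}
    (he : e ∉ edgeTo n '' edgesOf (F : Set Z2)) :
    edgeDiff e (glue hF ℓ k h) = edgeDiff e k := by
  have hz (z : Z2) (hz : z ∈ F ∨ z + step e.2 ∈ F) : toTor n z ≠ e.1 := by
    rintro hze
    exact he ⟨_, mem_edgesOf_iff.2 ⟨z, e.2, rfl, hz⟩, by rw [edgeTo_add_step, hze]⟩
  have h₁ : e.1 ∉ F.image (toTor n) := by
    rw [Finset.mem_image]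
    rintro ⟨z, hzF, hze⟩
    exact hz z (Or.inl hzF) hze
  have h₂ : e.1 + toTor n (step e.2) ∉ F.image (toTor n) := by
    rw [Finset.mem_image]
    rintro ⟨z, hzF, hze⟩
    refine hz (z - step e.2) (Or.inr (by rwa [sub_add_cancel])) ?_
    rw [map_sub, hze, add_sub_cancel_right]
  rw [edgeDiff_apply, edgeDiff_apply, glue_of_notMem hF ℓ k h h₁, glue_of_notMem hF ℓ k h h₂]

/-- The energy of a configuration carried by the torus edges not coming from `F`. -/
def restH (V : ℝ → ℝ) (F : Finset Z2) (ℓ : Z2 →+ ℝ) (k : Tor n → ℝ) : ℝ :=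
  ∑ e ∈ ((edgesOf_finite F).toFinset.image (edgeTo n))ᶜ, V (edgeDiff e k + ℓ (step e.2))

theorem torH_glue (V : ℝ → ℝ) (h : ↥F → ℝ) :
    torH V ℓ (glue hF ℓ k h) = glEnergy V F (bcOf ℓ k) h + restH V F ℓ k := by
  rw [torH, ← Finset.sum_add_sum_compl ((edgesOf_finite F).toFinset.image (edgeTo n)), restH,
    glEnergy_eq_sum, Finset.sum_image (by simpa using hF.injOn_edgeTo)]
  congr 1
  · refine Finset.sum_congr rfl fun b hb => ?_
    rw [grad_vee_bcOf (hF := hF) h ((Set.Finite.mem_toFinset _).1 hb)]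
  · refine Finset.sum_congr rfl fun e he => ?_
    rw [edgeDiff_glue_of_notMem hF ℓ k h]
    simpa using he

theorem eexp_neg_pinnedH_glue (V : ℝ → ℝ) (a : ℝ) {o : Tor n} (ho : o ∉ F.image (toTor n))
    (h : ↥F → ℝ) :
    eexp (-(pinnedH V ℓ a o (glue hF ℓ k h))) =
      eexp (-(restH V F ℓ k + a / 2 * k o ^ 2)) * glDens V F (bcOf ℓ k) h := by
  rw [pinnedH, torH_glue, glue_of_notMem hF ℓ k h ho, glDens, ← eexp_add]
  ring_nf

end embedding

/-! ### Exponential moments under the Ginzburg–Landau measure -/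

section transfer
variable {n : ℕ} {V : ℝ → ℝ} {a A L : ℝ} {F : Finset Z2} {ℓ : Z2 →+ ℝ} {ζ : Z2 → ℝ}

theorem bdry_finite (F : Finset Z2) : (bdry (F : Set Z2)).Finite := by
  refine Set.Finite.subset (Finset.finite_toSet
    ((F ×ˢ (Finset.Icc (-1) 1 ×ˢ Finset.Icc (-1) 1 : Finset Z2)).image fun p => p.1 + p.2)) ?_
  rintro x ⟨_, y, hy, hxy : (x.1 - y.1) ^ 2 + (x.2 - y.2) ^ 2 = 1⟩
  simp only [Finset.mem_coe, Finset.mem_image, Finset.mem_product, Finset.mem_Icc]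
  refine ⟨(y, x - y), ⟨hy, ?_⟩, by simp⟩
  simp only [Prod.fst_sub, Prod.snd_sub]
  refine ⟨⟨?_, ?_⟩, ?_, ?_⟩ <;> nlinarith [sq_nonneg (x.1 - y.1), sq_nonneg (x.2 - y.2)]

theorem bdry_nonempty (hF : F.Nonempty) : (bdry (F : Set Z2)).Nonempty := by
  obtain ⟨x, hx, hmax⟩ := F.exists_max_image Prod.fst hF
  refine ⟨x + (1, 0), fun h => ?_, x, hx, by simp [adjZ]⟩
  simpa using hmax _ h

theorem exists_shift_bcOf (hF : F.Nonempty) (hL : ∀ y ∈ bdry (F : Set Z2), |ζ y - ℓ y| ≤ L)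
    (k : Tor n → ℝ) (s : ℝ) :
    ∃ y₀ ∈ bdry (F : Set Z2), ∃ K, s * K = |s| * L - s * k (toTor n y₀) ∧
      ∀ y ∈ bdry (F : Set Z2), s * ζ y ≤ s * (bcOf ℓ k y + K) := by
  obtain ⟨y₀, hy₀, hmin⟩ := Set.exists_min_image _ (fun y => s * k (toTor n y)) (bdry_finite F)
    (bdry_nonempty hF)
  have hK : s * (|s| / s * L - k (toTor n y₀)) = |s| * L - s * k (toTor n y₀) := by
    rcases eq_or_ne s 0 with rfl | hs
    · simp
    · field_simp
  refine ⟨y₀, hy₀, _, hK, fun y hy => ?_⟩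
  have hζ : s * (ζ y - ℓ y) ≤ |s| * L := calc
    s * (ζ y - ℓ y) ≤ |s| * |ζ y - ℓ y| := (le_abs_self _).trans (abs_mul _ _).le
    _ ≤ |s| * L := mul_le_mul_of_nonneg_left (hL y hy) (abs_nonneg s)
  rw [mul_add, hK, bcOf]
  linarith [hmin y hy]

/-- The sum of `exp (s * (g x - g t))` over all sites `t` of the torus. It dominates the term of
the extremal boundary site, whose position depends on the configuration outside `F`. -/
def expDiffSum (x : Tor n) (s : ℝ) (g : Tor n → ℝ) : ℝ≥0∞ := ∑ t, eexp (s * (g x - g t))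

theorem measurable_expDiffSum (x : Tor n) (s : ℝ) : Measurable (expDiffSum x s) := by
  unfold expDiffSum
  fun_prop

theorem lintegral_eexp_glDens_le_bcOf (hV : ConvexOn ℝ Set.univ V) (hF : Embeds n F)
    (hL : ∀ y ∈ bdry (F : Set Z2), |ζ y - ℓ y| ≤ L) (k : Tor n → ℝ) (x : ↥F) (s : ℝ) :
    (∫⁻ h, eexp (s * (h x - ℓ x)) * glDens V F ζ h) * ∫⁻ h, glDens V F (bcOf ℓ k) h ≤
      eexp (|s| * L) * (∫⁻ h, glDens V F ζ h) *
        ∫⁻ h, expDiffSum (toTor n x) s (glue hF ℓ k h) * glDens V F (bcOf ℓ k) h := by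
  obtain ⟨y₀, hy₀, K, hK, hζ⟩ := exists_shift_bcOf ⟨x, x.2⟩ hL k s
  have hsite (h : ↥F → ℝ) : eexp (-(s * ℓ x)) * eexp (s * (h x + K)) ≤
      eexp (|s| * L) * expDiffSum (toTor n x) s (glue hF ℓ k h) := calc
    _ = eexp (|s| * L) * eexp (s * (glue hF ℓ k h (toTor n x) - glue hF ℓ k h (toTor n y₀))) := by
      rw [glue_of_mem, glue_of_notMem hF ℓ k h (hF.notMem_image hy₀), ← eexp_add, ← eexp_add]
      congr 1
      linear_combination hK
    _ ≤ _ := by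
      gcongr
      exact Finset.single_le_sum (f := fun t => eexp (s * (glue hF ℓ k h (toTor n x) -
        glue hF ℓ k h t))) (fun _ _ => zero_le) (Finset.mem_univ (toTor n y₀))
  calc (∫⁻ h, eexp (s * (h x - ℓ x)) * glDens V F ζ h) * ∫⁻ h, glDens V F (bcOf ℓ k) h
    _ = eexp (-(s * ℓ x)) *
          ((∫⁻ h, eexp (s * h x) * glDens V F ζ h) * ∫⁻ h, glDens V F (bcOf ℓ k) h) := by
      rw [← mul_assoc, ← lintegral_const_mul' _ _ (eexp_ne_top _)]
      simp only [← mul_assoc, ← eexp_add, ← sub_eq_neg_add, ← mul_sub]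
    _ ≤ eexp (-(s * ℓ x)) * ((∫⁻ h, glDens V F ζ h) *
          ∫⁻ h, eexp (s * (h x + K)) * glDens V F (bcOf ℓ k) h) :=
      mul_le_mul_right (lintegral_eexp_glDens_le_shift hV x hζ) _
    _ = (∫⁻ h, glDens V F ζ h) *
          ∫⁻ h, eexp (-(s * ℓ x)) * eexp (s * (h x + K)) * glDens V F (bcOf ℓ k) h := by
      rw [mul_left_comm, ← lintegral_const_mul' _ _ (eexp_ne_top _)]
      simp only [mul_assoc]
    _ ≤ (∫⁻ h, glDens V F ζ h) * ∫⁻ h, eexp (|s| * L) *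
          (expDiffSum (toTor n x) s (glue hF ℓ k h) * glDens V F (bcOf ℓ k) h) := by
      refine mul_le_mul_right (lintegral_mono fun h => ?_) _
      rw [← mul_assoc]
      exact mul_le_mul_left (hsite h) _
    _ = _ := by rw [lintegral_const_mul' _ _ (eexp_ne_top _), ← mul_assoc, mul_comm (eexp _)]

theorem lintegral_expDiffSum_pinnedH_le (ha : 0 < a) (hV : Pinched QuadraticMap.sq a A V)
    (o x : Tor n) (s : ℝ) :
    ∫⁻ g, expDiffSum x s g * eexp (-(pinnedH V ℓ a o g)) ≤
      2 * 4 ^ n * eexp (4 * s ^ 2 * ((n + 1) ^ 2 / a)) * ∫⁻ g, eexp (-(pinnedH V ℓ a o g)) := by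
  have hU := (pinched_pinnedH (ℓ := ℓ) hV o).continuous
  have hcard : (Fintype.card (Tor n) : ℝ≥0∞) = 4 ^ n := by
    rw [Fintype.card_prod, ZMod.card, ← mul_pow]
    norm_num
  simp only [expDiffSum, Finset.sum_mul]
  rw [lintegral_finsetSum _ fun t _ => by fun_prop]
  refine (Finset.sum_le_card_nsmul _ _ _ fun t _ =>
    lintegral_eexp_sub_pinnedH_le ha hV o x t s).trans_eq ?_
  rw [Finset.card_univ, nsmul_eq_mul, hcard]
  ring

/-- Conditionally on the configuration outside the image of `F`, the pinned torus measure is a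
Ginzburg–Landau measure on `F`, so the comparison of boundary conditions can be averaged. -/
theorem lintegral_eexp_glDens_mul_lintegral_pinnedH_le (hV : ConvexOn ℝ Set.univ V)
    (hF : Embeds n F) (hL : ∀ y ∈ bdry (F : Set Z2), |ζ y - ℓ y| ≤ L) {o : Tor n}
    (ho : o ∉ F.image (toTor n)) (x : ↥F) (s : ℝ) :
    (∫⁻ h, eexp (s * (h x - ℓ x)) * glDens V F ζ h) * ∫⁻ g, eexp (-(pinnedH V ℓ a o g)) ≤
      eexp (|s| * L) * (∫⁻ h, glDens V F ζ h) *
        ∫⁻ g, expDiffSum (toTor n x) s g * eexp (-(pinnedH V ℓ a o g)) := by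
  set X := ∫⁻ h, eexp (s * (h x - ℓ x)) * glDens V F ζ h
  set Y := eexp (|s| * L) * ∫⁻ h, glDens V F ζ h
  have hVc := continuous_of_convexOn_univ hV
  have hS := measurable_expDiffSum (toTor n x) s
  have hW : Measurable fun g : Tor n → ℝ => eexp (-(pinnedH V ℓ a o g)) := by
    unfold pinnedH torH
    fun_prop
  rw [← lintegral_const_mul _ hW, ← lintegral_const_mul _ (by fun_prop)]
  refine lintegral_le_of_lmarginal_le (F.image (toTor n)) (by fun_prop) (by fun_prop) fun k => ?_
  have hD := measurable_glDens hVc F (bcOf ℓ k)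
  have hSD : Measurable fun h =>
      expDiffSum (toTor n x) s (glue hF ℓ k h) * glDens V F (bcOf ℓ k) h :=
    (hS.comp (measurable_glue hF ℓ k)).mul hD
  rw [lmarginal_eq_lintegral_glue hF ℓ, lmarginal_eq_lintegral_glue hF ℓ]
  simp only [eexp_neg_pinnedH_glue hF ℓ k V a ho]
  set c := eexp (-(restH V F ℓ k + a / 2 * k o ^ 2))
  calc ∫⁻ h, X * (c * glDens V F (bcOf ℓ k) h) = c * (X * ∫⁻ h, glDens V F (bcOf ℓ k) h) := by
        simp only [mul_left_comm X c]
        rw [lintegral_const_mul _ (hD.const_mul _), lintegral_const_mul _ hD]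
    _ ≤ c * (Y * ∫⁻ h, expDiffSum (toTor n x) s (glue hF ℓ k h) * glDens V F (bcOf ℓ k) h) :=
        mul_le_mul_right (lintegral_eexp_glDens_le_bcOf hV hF hL k x s) _
    _ = ∫⁻ h, Y * (expDiffSum (toTor n x) s (glue hF ℓ k h) * (c * glDens V F (bcOf ℓ k) h)) := by
        simp only [mul_left_comm _ c]
        rw [lintegral_const_mul _ (hSD.const_mul _), lintegral_const_mul _ hSD]

theorem lintegral_eexp_glDens_le (ha : 0 < a) (hlb : StrongConvexOn Set.univ a V)
    (hub : StrongConcaveOn Set.univ (-A) V) (hF : Embeds n F)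
    (hL : ∀ y ∈ bdry (F : Set Z2), |ζ y - ℓ y| ≤ L) (x : ↥F) (s : ℝ) :
    ∫⁻ h, eexp (s * (h x - ℓ x)) * glDens V F ζ h ≤
      2 * 4 ^ n * eexp (|s| * L + 4 * s ^ 2 * ((n + 1) ^ 2 / a)) * ∫⁻ h, glDens V F ζ h := by
  have hV := convexOn_of_strongConvexOn ha.le hlb
  obtain ⟨y₀, hy₀⟩ := bdry_nonempty ⟨x, x.2⟩
  rw [← ENNReal.mul_le_mul_iff_left
    (lintegral_eexp_neg_pinnedH_ne_zero (ℓ := ℓ) (a := a) (continuous_of_convexOn_univ hV)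
      (toTor n y₀)) (lintegral_eexp_neg_pinnedH_ne_top ha hlb _)]
  refine (lintegral_eexp_glDens_mul_lintegral_pinnedH_le hV hF hL (hF.notMem_image hy₀) x s).trans
    ?_
  refine (mul_le_mul_right (lintegral_expDiffSum_pinnedH_le ha
    (pinched_of_strongConvexOn ha.le hlb hub) _ _ s) _).trans_eq ?_
  rw [eexp_add]
  ring

end transfer

/-! ### Moments of the maximum -/

section moments

theorem lintegral_le_of_isGL {V : ℝ → ℝ} (hV : Continuous V) {F : Finset Z2} {ζ : Z2 → ℝ}
    {P : Measure (↥F → ℝ)} (hP : IsGL V F ζ P) {f : (↥F → ℝ) → ℝ≥0∞} (hf : Measurable f)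
    {C : ℝ≥0∞} (h : ∫⁻ h, f h * glDens V F ζ h ≤ C * ∫⁻ h, glDens V F ζ h) :
    ∫⁻ h, f h ∂P ≤ C := by
  obtain ⟨hprob, c, -, -, rfl⟩ := hP
  have lintegral_eq : ∀ g : (↥F → ℝ) → ℝ≥0∞, Measurable g →
      ∫⁻ h, g h ∂(c • glFree V F ζ) = c * ∫⁻ h, g h * glDens V F ζ h := fun g hg => by
    rw [lintegral_smul_measure, smul_eq_mul]
    simp only [mul_comm (g _)]
    exact congrArg (c * ·) (lintegral_withDensity_eq_lintegral_mul _ (measurable_glDens hV F ζ) hg)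
  have hone : c * ∫⁻ h, glDens V F ζ h = 1 := by
    simpa only [lintegral_one, measure_univ, one_mul] using
      (lintegral_eq (fun _ => 1) measurable_const).symm
  calc ∫⁻ h, f h ∂(c • glFree V F ζ) = c * ∫⁻ h, f h * glDens V F ζ h := lintegral_eq f hf
    _ ≤ c * (C * ∫⁻ h, glDens V F ζ h) := mul_le_mul_right h _
    _ = C := by rw [mul_left_comm, hone, mul_one]

theorem enorm_pow_le_eexp_add_eexp {D : ℝ} (hD : 0 < D) (q : ℕ) (z : ℝ) :
    ‖z‖ₑ ^ q ≤ ENNReal.ofReal (q.factorial * D ^ q) * (eexp (D⁻¹ * z) + eexp (-D⁻¹ * z)) := by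
  have hexp : (|z| / D) ^ q / q.factorial ≤ exp (D⁻¹ * z) + exp (-D⁻¹ * z) := by
    refine (pow_div_factorial_le_exp _ (by positivity) q).trans ?_
    rw [div_eq_inv_mul, ← abs_of_pos (inv_pos.2 hD), ← abs_mul, abs_of_pos (inv_pos.2 hD), neg_mul]
    exact exp_abs_le _
  rw [div_pow, div_div, div_le_iff₀' (by positivity), mul_comm (D ^ q)] at hexp
  rw [enorm_eq_ofReal_abs, ← ENNReal.ofReal_pow (abs_nonneg z), eexp, eexp,
    ← ENNReal.ofReal_add (by positivity) (by positivity), ← ENNReal.ofReal_mul (by positivity)]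
  exact ENNReal.ofReal_le_ofReal hexp

theorem lintegral_enorm_pow_le_of_eexp {Ω : Type*} [MeasurableSpace Ω] {μ : Measure Ω} {X : Ω → ℝ}
    (hX : Measurable X) {D : ℝ} (hD : 0 < D) {K : ℝ≥0∞}
    (hK : ∀ s : ℝ, |s| = D⁻¹ → ∫⁻ ω, eexp (s * X ω) ∂μ ≤ K) (q : ℕ) :
    ∫⁻ ω, ‖X ω‖ₑ ^ q ∂μ ≤ ENNReal.ofReal (q.factorial * D ^ q) * (2 * K) := by
  have hD' := abs_of_pos (inv_pos.2 hD)
  calc ∫⁻ ω, ‖X ω‖ₑ ^ q ∂μ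
      ≤ ∫⁻ ω, ENNReal.ofReal (q.factorial * D ^ q) *
          (eexp (D⁻¹ * X ω) + eexp (-D⁻¹ * X ω)) ∂μ :=
        lintegral_mono fun ω => enorm_pow_le_eexp_add_eexp hD q (X ω)
    _ = ENNReal.ofReal (q.factorial * D ^ q) *
          (∫⁻ ω, eexp (D⁻¹ * X ω) ∂μ + ∫⁻ ω, eexp (-D⁻¹ * X ω) ∂μ) := by
        rw [lintegral_const_mul _ (by fun_prop), lintegral_add_left (by fun_prop)]
    _ ≤ ENNReal.ofReal (q.factorial * D ^ q) * (2 * K) := by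
        rw [two_mul]
        exact mul_le_mul_right (add_le_add (hK _ hD') (hK _ ((abs_neg _).trans hD'))) _

theorem enorm_pow_le_sum {ι : Type*} [Fintype ι] [Nonempty ι] (f : ι → ℝ) (q : ℕ) :
    ‖f‖ₑ ^ q ≤ ∑ i, ‖f i‖ₑ ^ q := by
  obtain ⟨i, hi⟩ := (IsGreatest.pi_norm f).1
  have hi' : ‖f‖ₑ = ‖f i‖ₑ := by rw [← ofReal_norm, ← ofReal_norm, ← hi]
  rw [hi']
  exact Finset.single_le_sum (f := fun i => ‖f i‖ₑ ^ q) (fun _ _ => zero_le) (Finset.mem_univ i)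

theorem integral_norm_rpow_rpow_le {Ω E : Type*} [MeasurableSpace Ω] [NormedAddCommGroup E]
    {μ : Measure Ω} [IsProbabilityMeasure μ] {f : Ω → E} (hf : AEStronglyMeasurable f μ) {p : ℝ}
    (hp : 0 < p) {q : ℕ} (hpq : p ≤ q) {B : ℝ} (hB : 0 ≤ B)
    (h : ∫⁻ ω, ‖f ω‖ₑ ^ q ∂μ ≤ ENNReal.ofReal B) :
    (∫ ω, ‖f ω‖ ^ p ∂μ) ^ (1 / p) ≤ B ^ (1 / q : ℝ) := by
  have hq : (0 : ℝ) < q := hp.trans_le hpq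
  have hq₀ : (q : ℝ≥0∞) ≠ 0 := by exact_mod_cast hq.ne'
  have hLp : eLpNorm f (ENNReal.ofReal p) μ ≤ ENNReal.ofReal (B ^ (1 / q : ℝ)) :=
    calc eLpNorm f (ENNReal.ofReal p) μ ≤ eLpNorm f q μ :=
          eLpNorm_le_eLpNorm_of_exponent_le
            ((ENNReal.ofReal_le_ofReal hpq).trans_eq (ENNReal.ofReal_natCast q)) hf
      _ = (∫⁻ ω, ‖f ω‖ₑ ^ q ∂μ) ^ (1 / q : ℝ) := by
          rw [eLpNorm_eq_lintegral_rpow_enorm_toReal hq₀ (ENNReal.natCast_ne_top q),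
            ENNReal.toReal_natCast]
          simp only [ENNReal.rpow_natCast]
      _ ≤ ENNReal.ofReal B ^ (1 / q : ℝ) := ENNReal.rpow_le_rpow h (by positivity)
      _ = ENNReal.ofReal (B ^ (1 / q : ℝ)) := ENNReal.ofReal_rpow_of_nonneg hB (by positivity)
  have hnorm := lpNorm_eq_integral_norm_rpow_toReal (ENNReal.ofReal_pos.2 hp).ne'
    ENNReal.ofReal_ne_top hf
  rw [ENNReal.toReal_ofReal hp.le] at hnorm
  rw [one_div, ← hnorm, ← toReal_eLpNorm hf]
  exact ENNReal.toReal_le_of_le_ofReal (by positivity) hLp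

theorem Embeds.card_le {n : ℕ} {F : Finset Z2} (hF : Embeds n F) : F.card ≤ 4 ^ n := by
  calc F.card = (F.image (toTor n)).card :=
        (Finset.card_image_of_injOn (hF.mono Set.subset_union_left)).symm
    _ ≤ Fintype.card (Tor n) := Finset.card_le_univ _
    _ = 4 ^ n := by
        rw [Fintype.card_prod, ZMod.card, ← mul_pow]
        norm_num

variable {n : ℕ} {V : ℝ → ℝ} {a A : ℝ} {F : Finset Z2} {ℓ : Z2 →+ ℝ} {ζ : Z2 → ℝ} {L D : ℝ}
  {P : Measure (↥F → ℝ)}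

theorem lintegral_enorm_sub_pow_le (ha : 0 < a) (hlb : StrongConvexOn Set.univ a V)
    (hub : StrongConcaveOn Set.univ (-A) V) (hF : Embeds n F)
    (hL : ∀ y ∈ bdry (F : Set Z2), |ζ y - ℓ y| ≤ L) (hLD : L ≤ D) (hnD : 2 * (n + 1) / √a ≤ D)
    (hP : IsGL V F ζ P) (x : ↥F) (q : ℕ) :
    ∫⁻ h, ‖h x - ℓ x‖ₑ ^ q ∂P ≤
      ENNReal.ofReal (q.factorial * D ^ q) * (2 * (2 * 4 ^ n * eexp 2)) := by
  have hD : 0 < D := hnD.trans_lt' (by positivity)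
  refine lintegral_enorm_pow_le_of_eexp (by fun_prop) hD (fun s hs => ?_) q
  refine (lintegral_le_of_isGL (continuous_of_convexOn_univ (convexOn_of_strongConvexOn ha.le hlb))
    hP (by fun_prop) (lintegral_eexp_glDens_le ha hlb hub hF hL x s)).trans ?_
  refine mul_le_mul_right (eexp_le_eexp ?_) _
  have hmean : |s| * L ≤ 1 := by
    rw [hs]
    exact (inv_mul_le_one₀ hD).2 hLD
  have hvar : 4 * s ^ 2 * ((n + 1) ^ 2 / a) ≤ 1 :=
    calc 4 * s ^ 2 * ((n + 1) ^ 2 / a) = (D⁻¹ * (2 * (n + 1) / √a)) ^ 2 := by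
          rw [mul_pow, div_pow, sq_sqrt ha.le, ← sq_abs s, hs]
          ring
      _ ≤ 1 := pow_le_one₀ (by positivity) ((inv_mul_le_one₀ hD).2 hnD)
  linarith

theorem sSup_abs_vee_sub_eq_norm (hne : F.Nonempty) (ℓ : Z2 → ℝ) (ζ : Z2 → ℝ) (h : ↥F → ℝ) :
    sSup {m : ℝ | ∃ x ∈ F, m = |vee F h ζ x - ℓ x|} = ‖fun x : ↥F => h x - ℓ x‖ := by
  have := hne.to_subtype
  have hset : {m : ℝ | ∃ x ∈ F, m = |vee F h ζ x - ℓ x|} =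
      Set.range fun x : ↥F => ‖h x - ℓ x‖ := by
    ext m
    constructor
    · rintro ⟨x, hx, rfl⟩
      exact ⟨⟨x, hx⟩, by simp only [vee, hx, dite_true, norm_eq_abs]⟩
    · rintro ⟨x, rfl⟩
      exact ⟨x, x.2, by simp only [vee, x.2, dite_true, norm_eq_abs]⟩
  rw [hset]
  exact (IsGreatest.pi_norm _).csSup_eq

theorem lintegral_enorm_pi_sub_pow_le (ha : 0 < a) (hlb : StrongConvexOn Set.univ a V)
    (hub : StrongConcaveOn Set.univ (-A) V) (hF : Embeds n F) (hne : F.Nonempty)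
    (hL : ∀ y ∈ bdry (F : Set Z2), |ζ y - ℓ y| ≤ L) (hLD : L ≤ D) (hnD : 2 * (n + 1) / √a ≤ D)
    (hP : IsGL V F ζ P) (q : ℕ) :
    ∫⁻ h, ‖fun x : ↥F => h x - ℓ x‖ₑ ^ q ∂P ≤
      ENNReal.ofReal (D ^ q * (16 ^ n * (4 * q.factorial * exp 2))) := by
  have := hne.to_subtype
  have hD : 0 < D := hnD.trans_lt' (by positivity)
  set K := ENNReal.ofReal (q.factorial * D ^ q) * (2 * (2 * 4 ^ n * eexp 2)) with hK
  have hcard : (F.card : ℝ≥0∞) ≤ 4 ^ n := by exact_mod_cast hF.card_le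
  calc ∫⁻ h, ‖fun x : ↥F => h x - ℓ x‖ₑ ^ q ∂P
      ≤ ∫⁻ h, ∑ x : ↥F, ‖h x - ℓ x‖ₑ ^ q ∂P := lintegral_mono fun h => enorm_pow_le_sum _ q
    _ = ∑ x : ↥F, ∫⁻ h, ‖h x - ℓ x‖ₑ ^ q ∂P := lintegral_finsetSum _ fun x _ => by fun_prop
    _ ≤ ∑ _x : ↥F, K := Finset.sum_le_sum fun x _ =>
        lintegral_enorm_sub_pow_le ha hlb hub hF hL hLD hnD hP x q
    _ = F.card * K := by rw [Finset.sum_const, Finset.card_univ, Fintype.card_coe, nsmul_eq_mul]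
    _ ≤ 4 ^ n * K := mul_le_mul_left hcard _
    _ = ENNReal.ofReal (D ^ q * (16 ^ n * (4 * q.factorial * exp 2))) := by
        have hsq : (16 : ℝ) ^ n = 4 ^ n * 4 ^ n := by rw [← mul_pow]; norm_num
        have hfour : (4 : ℝ≥0∞) ^ n = ENNReal.ofReal (4 ^ n) := by
          rw [ENNReal.ofReal_pow (by norm_num), ENNReal.ofReal_ofNat]
        rw [hK, hfour, eexp, show (2 : ℝ≥0∞) = ENNReal.ofReal 2 from (ENNReal.ofReal_ofNat 2).symm]
        repeat rw [← ENNReal.ofReal_mul (by positivity)]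
        rw [hsq]
        ring_nf

theorem integral_sSup_rpow_rpow_le (ha : 0 < a) (hlb : StrongConvexOn Set.univ a V)
    (hub : StrongConcaveOn Set.univ (-A) V) (hF : Embeds n F) (hne : F.Nonempty)
    (hL : ∀ y ∈ bdry (F : Set Z2), |ζ y - ℓ y| ≤ L) (hLD : L ≤ D) (hnD : 2 * (n + 1) / √a ≤ D)
    (hP : IsGL V F ζ P) {p : ℝ} (hp : 0 < p) {q : ℕ} (hpq : p ≤ q) :
    (∫ h, (sSup {m : ℝ | ∃ x ∈ F, m = |vee F h ζ x - ℓ x|}) ^ p ∂P) ^ (1 / p) ≤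
      D * (16 ^ n * (4 * q.factorial * exp 2)) ^ (1 / q : ℝ) := by
  have := hP.1
  have hD : 0 < D := hnD.trans_lt' (by positivity)
  have hq : (q : ℝ) ≠ 0 := (hp.trans_le hpq).ne'
  simp only [sSup_abs_vee_sub_eq_norm hne]
  have hmeas : Measurable fun (h : ↥F → ℝ) (x : ↥F) => h x - ℓ x :=
    measurable_pi_lambda _ fun x => by fun_prop
  refine (integral_norm_rpow_rpow_le hmeas.aestronglyMeasurable hp hpq (by positivity)
    (lintegral_enorm_pi_sub_pow_le ha hlb hub hF hne hL hLD hnD hP q)).trans_eq ?_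
  rw [mul_rpow (by positivity) (by positivity), ← rpow_natCast D, ← rpow_mul hD.le,
    mul_one_div_cancel hq, rpow_one]

end moments

/-! ### Lattice sets of small diameter -/

section geometry

variable {F : Finset Z2}

theorem edist2_le_diamZ {x y : Z2} (hx : x ∈ F) (hy : y ∈ F) :
    edist2 x y ≤ diamZ (F : Set Z2) := by
  refine le_csSup (Set.Finite.bddAbove (Set.Finite.subset
    ((F ×ˢ F).finite_toSet.image fun p => edist2 p.1 p.2) ?_)) ⟨x, hx, y, hy, rfl⟩
  rintro d ⟨x, hx, y, hy, rfl⟩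
  exact ⟨(x, y), Finset.mem_coe.2 (Finset.mk_mem_product hx hy), rfl⟩

theorem nonempty_of_diamZ_pos (h : 0 < diamZ (F : Set Z2)) : F.Nonempty := by
  rw [Finset.nonempty_iff_ne_empty]
  rintro rfl
  simp [diamZ] at h

theorem abs_fst_sub_le_edist2 (x y : Z2) : |(x.1 : ℝ) - y.1| ≤ edist2 x y :=
  abs_le_sqrt (le_add_of_nonneg_right (sq_nonneg _))

theorem abs_snd_sub_le_edist2 (x y : Z2) : |(x.2 : ℝ) - y.2| ≤ edist2 x y :=
  abs_le_sqrt (le_add_of_nonneg_left (sq_nonneg _))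

theorem exists_mem_abs_sub_le_one {y : Z2} (hy : y ∈ (F : Set Z2) ∪ bdry (F : Set Z2)) :
    ∃ x ∈ F, |y.1 - x.1| ≤ 1 ∧ |y.2 - x.2| ≤ 1 := by
  rcases hy with hy | ⟨-, x, hx, hyx⟩
  · exact ⟨y, hy, by simp, by simp⟩
  · unfold adjZ at hyx
    refine ⟨x, hx, ?_, ?_⟩ <;> rw [← sq_le_one_iff_abs_le_one] <;>
      linarith [sq_nonneg (y.1 - x.1), sq_nonneg (y.2 - x.2)]

theorem eq_of_intCast_zmod_eq_of_near {m : ℕ} {R : ℝ} (hR : R + 2 < m) {i j x y : ℤ}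
    (hix : |i - x| ≤ 1) (hjy : |j - y| ≤ 1) (hxy : |(x : ℝ) - y| ≤ R)
    (h : (i : ZMod m) = (j : ZMod m)) : i = j := by
  rw [ZMod.intCast_eq_intCast_iff_dvd_sub] at h
  have hix' : |(x : ℝ) - i| ≤ 1 := by rw [abs_sub_comm]; exact_mod_cast hix
  have hjy' : |(j : ℝ) - y| ≤ 1 := by exact_mod_cast hjy
  have hlt : |(j : ℝ) - i| < m := by
    have hyx : |(y : ℝ) - x| ≤ R := by rwa [abs_sub_comm]
    have := abs_sub_le (j : ℝ) y i
    have := abs_sub_le (y : ℝ) x i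
    linarith
  linarith [Int.eq_zero_of_abs_lt_dvd h (by exact_mod_cast hlt)]

theorem embeds_of_diamZ_lt {n : ℕ} (hR : diamZ (F : Set Z2) + 2 < 2 ^ n) : Embeds n F := by
  have hR' : diamZ (F : Set Z2) + 2 < (2 ^ n : ℕ) := by exact_mod_cast hR
  intro y hy z hz hyz
  obtain ⟨x, hx, hyx₁, hyx₂⟩ := exists_mem_abs_sub_le_one hy
  obtain ⟨w, hw, hzw₁, hzw₂⟩ := exists_mem_abs_sub_le_one hz
  have hxw := edist2_le_diamZ hx hw
  obtain ⟨h₁, h₂⟩ := Prod.mk.inj hyz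
  exact Prod.ext
    (eq_of_intCast_zmod_eq_of_near hR' hyx₁ hzw₁ ((abs_fst_sub_le_edist2 x w).trans hxw) h₁)
    (eq_of_intCast_zmod_eq_of_near hR' hyx₂ hzw₂ ((abs_snd_sub_le_edist2 x w).trans hxw) h₂)

end geometry

/-! ### The torus side and the growth of logarithms -/

section scales

variable {R δ : ℝ}

theorem exists_two_pow_near (hR : 2 ≤ R) : ∃ n : ℕ, R + 2 < 2 ^ n ∧ (2 : ℝ) ^ n ≤ 4 * R := by
  obtain ⟨m, hle, hlt⟩ := exists_nat_pow_near (x := R + 2) (y := 2) (by linarith) (by norm_num)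
  refine ⟨m + 1, hlt, ?_⟩
  rw [pow_succ]
  linarith

theorem add_one_le_mul_rpow_of_two_pow_le (hR : 0 ≤ R) (hδ : 0 < δ) {n : ℕ}
    (hn : (2 : ℝ) ^ n ≤ 4 * R) : (n + 1 : ℝ) ≤ 2 * 8 ^ δ / δ * R ^ δ := by
  have hlog_two : (1 / 2 : ℝ) ≤ log 2 := by linarith [log_two_gt_d9]
  have hlog : (n + 1 : ℝ) * log 2 ≤ log (8 * R) := by
    have hpow : (2 : ℝ) ^ (n + 1) ≤ 8 * R := by
      rw [pow_succ]
      linarith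
    rw [← Nat.cast_add_one, ← log_pow]
    exact log_le_log (by positivity) hpow
  calc (n + 1 : ℝ) = 2 * ((n + 1) * (1 / 2)) := by ring
    _ ≤ 2 * ((n + 1) * log 2) := by gcongr
    _ ≤ 2 * ((8 * R) ^ δ / δ) := by
        gcongr
        exact hlog.trans (log_le_rpow_div (by positivity) hδ)
    _ = 2 * 8 ^ δ / δ * R ^ δ := by
        rw [mul_rpow (by norm_num) hR]
        ring

theorem log_rpow_le_mul_rpow (hR : 1 ≤ R) {Λ : ℝ} (hΛ : 0 < Λ) (hδ : 0 < δ) :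
    log R ^ Λ ≤ (Λ / δ) ^ Λ * R ^ δ := by
  have hR₀ : 0 ≤ R := zero_le_one.trans hR
  calc log R ^ Λ ≤ (R ^ (δ / Λ) / (δ / Λ)) ^ Λ :=
        rpow_le_rpow (log_nonneg hR) (log_le_rpow_div hR₀ (by positivity)) hΛ.le
    _ = (Λ / δ * R ^ (δ / Λ)) ^ Λ := by
        rw [div_div_eq_mul_div, mul_comm (R ^ _), mul_div_right_comm]
    _ = (Λ / δ) ^ Λ * R ^ δ := by
        rw [mul_rpow (by positivity) (by positivity), ← rpow_mul hR₀, div_mul_cancel₀ _ hΛ.ne']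

theorem exists_fluctuation_le_rpow {Λ a : ℝ} (hΛ : 0 < Λ) (hδ : 0 < δ) (ha : 0 < a) :
    ∃ C : ℝ, 0 < C ∧ ∀ (R : ℝ) (n : ℕ), 1 ≤ R → (2 : ℝ) ^ n ≤ 4 * R →
      Λ * log R ^ Λ + 2 * (n + 1) / √a ≤ C * R ^ δ := by
  refine ⟨Λ * (Λ / δ) ^ Λ + 2 / √a * (2 * 8 ^ δ / δ), by positivity, fun R n hR hn => ?_⟩
  calc Λ * log R ^ Λ + 2 * (n + 1) / √a = Λ * log R ^ Λ + 2 / √a * (n + 1) := by ring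
    _ ≤ Λ * ((Λ / δ) ^ Λ * R ^ δ) + 2 / √a * (2 * 8 ^ δ / δ * R ^ δ) := by
        gcongr
        · exact log_rpow_le_mul_rpow hR hΛ hδ
        · exact add_one_le_mul_rpow_of_two_pow_le (by linarith) hδ hn
    _ = (Λ * (Λ / δ) ^ Λ + 2 / √a * (2 * 8 ^ δ / δ)) * R ^ δ := by ring

theorem sixteen_pow_mul_rpow_le (hR : 1 ≤ R) {n : ℕ} (hn : (2 : ℝ) ^ n ≤ 4 * R) {q K : ℝ}
    (hq : 0 < q) (hqδ : 4 / q ≤ δ) (hK : 0 ≤ K) :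
    (16 ^ n * K) ^ (1 / q) ≤ (256 * K) ^ (1 / q) * R ^ δ := by
  have hR₀ : 0 ≤ R := zero_le_one.trans hR
  have h16 : (16 : ℝ) ^ n ≤ 256 * R ^ 4 :=
    calc (16 : ℝ) ^ n = (2 ^ n) ^ 4 := by rw [← pow_mul, mul_comm, pow_mul]; norm_num
      _ ≤ (4 * R) ^ 4 := by gcongr
      _ = 256 * R ^ 4 := by ring
  calc (16 ^ n * K) ^ (1 / q) ≤ (256 * R ^ 4 * K) ^ (1 / q) := by gcongr
    _ = (256 * K) ^ (1 / q) * R ^ (4 / q) := by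
        rw [mul_right_comm, mul_rpow (by positivity) (by positivity), ← rpow_natCast R,
          ← rpow_mul hR₀]
        norm_num [div_eq_mul_inv]
    _ ≤ (256 * K) ^ (1 / q) * R ^ δ := by gcongr

end scales

/-- The linear functional `u·x` on `ℤ²`. -/
def tilt (u : ℝ × ℝ) : Z2 →+ ℝ :=
  AddMonoidHom.mk' (fun x => u.1 * x.1 + u.2 * x.2) fun x y => by
    push_cast [Prod.fst_add, Prod.snd_add]
    ring

section secondDerivative

variable {V : ℝ → ℝ}

theorem deriv2_sub_div_two_mul_sq (hV : ContDiff ℝ 2 V) (c x : ℝ) :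
    deriv^[2] (fun x => V x - c / 2 * ‖x‖ ^ 2) x = deriv (deriv V) x - c := by
  have hV₁ : Differentiable ℝ V := hV.differentiable two_ne_zero
  have hV₂ : Differentiable ℝ (deriv V) := (hV.deriv' (n := 1)).differentiable one_ne_zero
  have hderiv : deriv (fun x => V x - c / 2 * ‖x‖ ^ 2) = fun x => deriv V x - c * x := by
    ext x
    simp only [norm_eq_abs, sq_abs]
    refine (((hV₁ x).hasDerivAt.sub ((hasDerivAt_pow 2 x).const_mul (c / 2))).congr_deriv ?_).deriv
    ring
  rw [Function.iterate_succ_apply, Function.iterate_one, hderiv]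
  exact (((hV₂ x).hasDerivAt.sub ((hasDerivAt_id x).const_mul c)).congr_deriv (by ring)).deriv

theorem contDiff_two_sub_div_two_mul_sq (hV : ContDiff ℝ 2 V) (c : ℝ) :
    ContDiff ℝ 2 fun x => V x - c / 2 * ‖x‖ ^ 2 := by
  simp only [norm_eq_abs, sq_abs]
  fun_prop

theorem strongConvexOn_univ_of_le_deriv2 {a : ℝ} (hV : ContDiff ℝ 2 V)
    (h : ∀ x, a ≤ deriv (deriv V) x) : StrongConvexOn Set.univ a V := by
  have hW := contDiff_two_sub_div_two_mul_sq hV a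
  refine strongConvexOn_iff_convex.2 (convexOn_univ_of_deriv2_nonneg
    (hW.differentiable two_ne_zero) ((hW.deriv' (n := 1)).differentiable one_ne_zero) fun x => ?_)
  rw [deriv2_sub_div_two_mul_sq hV]
  exact sub_nonneg.2 (h x)

theorem strongConcaveOn_univ_of_deriv2_le {A : ℝ} (hV : ContDiff ℝ 2 V)
    (h : ∀ x, deriv (deriv V) x ≤ A) : StrongConcaveOn Set.univ (-A) V := by
  have hW := contDiff_two_sub_div_two_mul_sq hV A
  simp only [strongConcaveOn_iff_convex, neg_div, neg_mul, ← sub_eq_add_neg]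
  refine concaveOn_univ_of_deriv2_nonpos (hW.differentiable two_ne_zero)
    ((hW.deriv' (n := 1)).differentiable one_ne_zero) fun x => ?_
  rw [deriv2_sub_div_two_mul_sq hV]
  exact sub_nonpos.2 (h x)

end secondDerivative

theorem moments_of_the_maximum_general {V : ℝ → ℝ} {a A : ℝ} (ha : 0 < a)
    (hlb : StrongConvexOn Set.univ a V) (hub : StrongConcaveOn Set.univ (-A) V) {Λ ε p : ℝ}
    (hΛ : 0 < Λ) (hε : 0 < ε) (hp : 0 < p) :
    ∃ c : ℝ, 0 < c ∧
      ∀ (F : Finset Z2) (u : ℝ × ℝ) (ζ : Z2 → ℝ),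
        2 ≤ diamZ (F : Set Z2) →
        (∀ x ∈ bdry (F : Set Z2),
          |ζ x - (u.1 * (x.1 : ℝ) + u.2 * (x.2 : ℝ))|
            ≤ Λ * Real.log (diamZ (F : Set Z2)) ^ Λ) →
        ∀ P : Measure (↥F → ℝ), IsGL V F ζ P →
          (∫ h, (sSup {m : ℝ | ∃ x ∈ F,
              m = |vee F h ζ x - (u.1 * (x.1 : ℝ) + u.2 * (x.2 : ℝ))|}) ^ p ∂P) ^ (1 / p)
            ≤ c * diamZ (F : Set Z2) ^ ε := by
  have hδ : 0 < ε / 2 := by positivity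
  -- `16 ^ n ≤ 256 R ^ 4`, so for `q ≥ 4 / (ε / 2)` its `q`-th root is `O(R ^ (ε / 2))`.
  obtain ⟨q, hq⟩ := exists_nat_ge (max p (4 / (ε / 2)))
  have hpq : p ≤ q := (le_max_left _ _).trans hq
  have hq₀ : (0 : ℝ) < q := hp.trans_le hpq
  have hqδ : 4 / (q : ℝ) ≤ ε / 2 := (div_le_comm₀ hδ hq₀).1 ((le_max_right _ _).trans hq)
  obtain ⟨C, hC, hfluct⟩ := exists_fluctuation_le_rpow hΛ hδ ha
  set K : ℝ := 4 * q.factorial * exp 2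
  refine ⟨C * (256 * K) ^ (1 / q : ℝ), by positivity, fun F u ζ hdiam hζ P hP => ?_⟩
  set R := diamZ (F : Set Z2)
  have hR : 1 ≤ R := by linarith
  obtain ⟨n, hlt, hle⟩ := exists_two_pow_near hdiam
  have hlog : 0 ≤ log R := log_nonneg hR
  calc _ ≤ (Λ * log R ^ Λ + 2 * (n + 1) / √a) * (16 ^ n * K) ^ (1 / q : ℝ) :=
        integral_sSup_rpow_rpow_le (ℓ := tilt u) ha hlb hub (embeds_of_diamZ_lt hlt)
          (nonempty_of_diamZ_pos (by positivity)) hζ (le_add_of_nonneg_right (by positivity))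
          (le_add_of_nonneg_left (by positivity)) hP hp hpq
    _ ≤ (C * R ^ (ε / 2)) * ((256 * K) ^ (1 / q : ℝ) * R ^ (ε / 2)) := by
        gcongr
        · exact hfluct R n hR hle
        · exact sixteen_pow_mul_rpow_le hR hle hq₀ hqδ (by positivity)
    _ = C * (256 * K) ^ (1 / q : ℝ) * R ^ ε := by
        rw [mul_mul_mul_comm, ← rpow_add (by positivity), add_halves]

/-- Moments of the maximum.
For every `Λ̄, ε > 0` and `p ≥ 1` there is `c = c(Λ̄, ε, p, V) > 0` such that for every finite
connected `F ⊆ ℤ²` of diameter `R ≥ 2`, every `u ∈ ℝ²` and every boundary condition `ζ` with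
`max_{x ∈ ∂F} |ζ(x) − u·x| ≤ Λ̄ (log R)^Λ̄`: if `h ∼ P_F^ζ` and
`M = max_{x ∈ F} |h(x) − u·x|`, then `(E[M^p])^{1/p} ≤ c R^ε`. -/
theorem moments_of_the_maximum
    (V : ℝ → ℝ) (aV AV : ℝ)
    (hC2 : ContDiff ℝ 2 V) (hsym : ∀ x, V (-x) = V x)
    (haV : 0 < aV) (hlb : ∀ x, aV ≤ deriv (deriv V) x)
    (hub : ∀ x, deriv (deriv V) x ≤ AV) :
    ∀ Λ ε p : ℝ, 0 < Λ → 0 < ε → 1 ≤ p →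
    ∃ c : ℝ, 0 < c ∧
      ∀ (F : Finset Z2) (u : ℝ × ℝ) (ζ : Z2 → ℝ),
        DiscConnected (F : Set Z2) →
        2 ≤ diamZ (F : Set Z2) →
        (∀ x ∈ bdry (F : Set Z2),
          |ζ x - (u.1 * (x.1 : ℝ) + u.2 * (x.2 : ℝ))|
            ≤ Λ * Real.log (diamZ (F : Set Z2)) ^ Λ) →
        ∀ P : Measure (↥F → ℝ), IsGL V F ζ P →
          (∫ h, (sSup {m : ℝ | ∃ x ∈ F,
              m = |vee F h ζ x - (u.1 * (x.1 : ℝ) + u.2 * (x.2 : ℝ))|}) ^ p ∂P) ^ (1 / p)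
            ≤ c * diamZ (F : Set Z2) ^ ε := fun _ _ _ hΛ hε hp =>
  have ⟨c, hc, h⟩ := moments_of_the_maximum_general haV
    (strongConvexOn_univ_of_le_deriv2 hC2 hlb) (strongConcaveOn_univ_of_deriv2_le hC2 hub) hΛ hε
    (zero_lt_one.trans_le hp)
  ⟨c, hc, fun F u ζ _ => h F u ζ⟩

end
end

section
/- Energy inequality for the discrete parabolic equation with static boundary data: There exists a constant C > 0 depending only on constants 0 < a ≤ A < ∞ such that the following holds. Let D ⊆ ℤ² be finite, T > 0, and for each nearest-neighbor edge b with at least one endpoint in D let c_t(b) ∈ [a, A] be measurable in t ∈ [0, T]. Suppose f : [0, T] × (D ∪ ∂D) → ℝ satisfies: for each x ∈ D the map t ↦ f_t(x) is differentiable with ∂_t f_t(x) = Σ_{y ∼ x, y ∈ D∪∂D} c_t((x, y)) (f_t(y) − f_t(x)), and f_t(x) = f_0(x) for all t ∈ [0, T] and x ∈ ∂D. Then Σ_{x∈D} f_T(x)² + ∫_0^T Σ_{b∈D*°} |∇f_t(b)|² dt ≤ C ( Σ_{x∈D} f_0(x)² + ∫_0^T Σ_{b∈∂D*} |f_0(x_b)|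 |∇f_t(b)| dt ), where D*° is the set of edges with both endpoints in D, ∂D* the set of edges with one endpoint in D and one in ∂D, and for b ∈ ∂D*, x_b denotes the endpoint of b lying in ∂D. -/
/-!
The time derivative of `∑_D f_t²` is `2 ∑_D f_t L f_t`, which summation by parts turns into
`-2 ∑_b ∇(1_D f)(b) c(b) ∇f(b)` over the edges touching `D`. On interior edges the cutoff is
invisible and the term is `-2 c |∇f|²`. On a boundary edge with interior value `y` and exterior
value `z` it is `2 c y (z - y) = 2 c z (z - y) - 2 c (z - y)²`, which is at most
`2 c |z| |z - y|`. Since `z` is static, integrating in time gives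
`∑_D f_T² + 2 a ∫ ∑_{D*°} |∇f|² ≤ ∑_D f_0² + 2 A ∫ ∑_{∂D*} |f_0(x_b)| |∇f|`.
-/

open MeasureTheory ProbabilityTheory Real
open scoped ENNReal NNReal Classical

noncomputable section

/-- The four lattice directions. -/
def nbrs : Finset Z2 := {((1, 0) : Z2), ((-1, 0) : Z2), ((0, 1) : Z2), ((0, -1) : Z2)}

section General

/-- Divergence at `x` of the flow `θ` along a finite set `E` of oriented edges: the flow leaving
`x` minus the flow entering `x`. -/
def divergence {V R : Type*} [DecidableEq V] [AddCommGroup R] (E : Finset (V × V))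
    (θ : V × V → R) (x : V) : R :=
  ∑ b ∈ E with b.1 = x, θ b - ∑ b ∈ E with b.2 = x, θ b

lemma sum_mul_sum_fiber {ι V R : Type*} [DecidableEq V] [NonUnitalNonAssocSemiring R]
    (s : Finset ι) (D : Finset V) (g : ι → V) (w : V → R) (θ : ι → R) :
    ∑ x ∈ D, w x * ∑ i ∈ s with g i = x, θ i =
      ∑ i ∈ s, (D : Set V).indicator w (g i) * θ i := by
  calc ∑ x ∈ D, w x * ∑ i ∈ s with g i = x, θ i
      = ∑ x ∈ D, ∑ i ∈ s with g i = x, w (g i) * θ i := by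
        refine Finset.sum_congr rfl fun x _ => ?_
        rw [Finset.mul_sum]
        exact Finset.sum_congr rfl fun i hi => by rw [(Finset.mem_filter.1 hi).2]
    _ = ∑ i ∈ s with g i ∈ D, w (g i) * θ i := Finset.sum_fiberwise_eq_sum_filter _ _ _ _
    _ = ∑ i ∈ s, (D : Set V).indicator w (g i) * θ i := by
        simp only [Finset.sum_filter, Set.indicator_apply, Finset.mem_coe, ite_mul, zero_mul]

lemma sum_mul_divergence {V R : Type*} [DecidableEq V] [NonUnitalNonAssocRing R]
    (E : Finset (V × V)) (D : Finset V) (w : V → R) (θ : V × V → R) :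
    ∑ x ∈ D, w x * divergence E θ x =
      -∑ b ∈ E, ((D : Set V).indicator w b.2 - (D : Set V).indicator w b.1) * θ b := by
  simp only [divergence, mul_sub, Finset.sum_sub_distrib, sum_mul_sum_fiber, sub_mul, neg_sub]

lemma finsum_mem_le_finsum_mem {ι M : Type*} [AddCommMonoid M] [PartialOrder M]
    [IsOrderedAddMonoid M] {s : Set ι} (hs : s.Finite) {f g : ι → M} (h : ∀ i ∈ s, f i ≤ g i) :
    ∑ᶠ i ∈ s, f i ≤ ∑ᶠ i ∈ s, g i := by
  rw [finsum_mem_eq_finite_toFinset_sum _ hs, finsum_mem_eq_finite_toFinset_sum _ hs]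
  exact Finset.sum_le_sum fun i hi => h i (hs.mem_toFinset.1 hi)

lemma continuousOn_finsum_mem {ι X M : Type*} [TopologicalSpace X] [TopologicalSpace M]
    [AddCommMonoid M] [ContinuousAdd M] {s : Set ι} (hs : s.Finite) {f : ι → X → M} {S : Set X}
    (h : ∀ i ∈ s, ContinuousOn (f i) S) : ContinuousOn (fun x => ∑ᶠ i ∈ s, f i x) S := by
  simp only [finsum_mem_eq_finite_toFinset_sum _ hs]
  exact continuousOn_finsetSum _ fun i hi => h i (hs.mem_toFinset.1 hi)

lemma add_mul_integral_le_of_deriv_le {r s α β : ℝ} (hrs : r ≤ s) {G G' I B : ℝ → ℝ}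
    (hG : ∀ t ∈ Set.Icc r s, HasDerivWithinAt G (G' t) (Set.Icc r s) t)
    (hI : IntervalIntegrable I volume r s) (hB : IntervalIntegrable B volume r s)
    (hle : ∀ t ∈ Set.Ioo r s, G' t ≤ β * B t - α * I t) :
    G s + α * ∫ t in r..s, I t ≤ G r + β * ∫ t in r..s, B t := by
  have hφ : IntervalIntegrable (fun t => β * B t - α * I t) volume r s :=
    (hB.const_mul β).sub (hI.const_mul α)
  have hmain : G s - G r ≤ ∫ t in r..s, (β * B t - α * I t) :=
    intervalIntegral.sub_le_integral_of_hasDeriv_right_of_le hrs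
      (fun t ht => (hG t ht).continuousWithinAt)
      (fun t ht => ((hG t (Set.Ioo_subset_Icc_self ht)).hasDerivAt
        (Icc_mem_nhds ht.1 ht.2)).hasDerivWithinAt)
      ((intervalIntegrable_iff_integrableOn_Icc_of_le hrs).1 hφ) hle
  rw [intervalIntegral.integral_sub (hB.const_mul β) (hI.const_mul α),
    intervalIntegral.integral_const_mul, intervalIntegral.integral_const_mul] at hmain
  linarith

lemma add_le_div_mul_add_of_weighted_le {x y u v α β : ℝ} (hα : 0 < α) (hx : 0 ≤ x)
    (hy : 0 ≤ y) (hu : 0 ≤ u) (hv : 0 ≤ v) (h : x + α * y ≤ u + β * v) :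
    x + y ≤ max 1 β / min 1 α * (u + v) := by
  rw [div_mul_eq_mul_div, le_div_iff₀ (lt_min one_pos hα)]
  calc (x + y) * min 1 α = x * min 1 α + y * min 1 α := add_mul ..
    _ ≤ x * 1 + y * α := by gcongr <;> simp
    _ ≤ 1 * u + β * v := by linarith
    _ ≤ max 1 β * u + max 1 β * v := by gcongr <;> simp
    _ = max 1 β * (u + v) := (mul_add ..).symm

lemma mul_mul_sub_le_mul_abs_mul_abs {k A y z : ℝ} (hk : k ∈ Set.Icc 0 A) :
    y * (k * (z - y)) ≤ A * (|z| * |z - y|) :=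
  calc y * (k * (z - y)) = k * (z * (z - y) - (z - y) ^ 2) := by ring
    _ ≤ k * (|z| * |z - y|) := by
        rw [← abs_mul]
        refine mul_le_mul_of_nonneg_left ?_ hk.1
        linarith [le_abs_self (z * (z - y)), sq_nonneg (z - y)]
    _ ≤ A * (|z| * |z - y|) := by gcongr; exact hk.2

end General

section Edges

variable {D : Set Z2} {b : Z2 × Z2} {x : Z2}

lemma adjZ_comm {x y : Z2} : adjZ x y ↔ adjZ y x := by
  simp only [adjZ, sub_sq_comm]

lemma adjZ_of_mem_edgesOf (hb : b ∈ edgesOf D) : adjZ b.1 b.2 := by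
  rcases hb.1 with h | h <;> simp [adjZ, h]

lemma adjZ_add_of_mem_nbrs (x : Z2) {e : Z2} (he : e ∈ nbrs) : adjZ (x + e) x := by
  simp only [nbrs, Finset.mem_insert, Finset.mem_singleton] at he
  rcases he with rfl | rfl | rfl | rfl <;> simp [adjZ]

lemma sum_nbrs {M : Type*} [AddCommMonoid M] (F : Z2 → M) :
    ∑ e ∈ nbrs, F e = F (1, 0) + (F (-1, 0) + (F (0, 1) + F (0, -1))) := by
  rw [nbrs, Finset.sum_insert (by simp), Finset.sum_insert (by simp), Finset.sum_pair (by simp)]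

lemma mem_union_bdry_of_adjZ {y : Z2} (hx : x ∈ D) (h : adjZ y x) : y ∈ D ∪ bdry D :=
  or_iff_not_imp_left.2 fun hy => ⟨hy, x, hx, h⟩

lemma finite_edgesOf (D : Finset Z2) : (edgesOf (D : Set Z2)).Finite := by
  refine (D.biUnion fun x => {(x, x + (1, 0)), (x, x + (0, 1)), (x - (1, 0), x),
    (x - (0, 1), x)}).finite_toSet.subset ?_
  rintro ⟨x, y⟩ ⟨h, hx | hy⟩ <;> change y = x + (1, 0) ∨ y = x + (0, 1) at h
  · refine Finset.mem_coe.2 (Finset.mem_biUnion.2 ⟨x, hx, ?_⟩)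
    rcases h with rfl | rfl <;> simp
  · refine Finset.mem_coe.2 (Finset.mem_biUnion.2 ⟨y, hy, ?_⟩)
    rcases h with rfl | rfl <;> simp

lemma intEdges_subset_edgesOf (D : Set Z2) : intEdges D ⊆ edgesOf D :=
  fun _ hb => ⟨hb.1, Or.inl hb.2.1⟩

lemma bdEdges_subset_edgesOf (D : Set Z2) : bdEdges D ⊆ edgesOf D :=
  fun _ hb => ⟨hb.1, hb.2.imp And.left And.right⟩

lemma finite_intEdges (D : Finset Z2) : (intEdges (D : Set Z2)).Finite :=
  (finite_edgesOf D).subset (intEdges_subset_edgesOf _)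

lemma finite_bdEdges (D : Finset Z2) : (bdEdges (D : Set Z2)).Finite :=
  (finite_edgesOf D).subset (bdEdges_subset_edgesOf _)

lemma mem_union_bdry_of_mem_edgesOf (hb : b ∈ edgesOf D) :
    b.1 ∈ D ∪ bdry D ∧ b.2 ∈ D ∪ bdry D := by
  have hadj := adjZ_of_mem_edgesOf hb
  rcases hb.2 with h | h
  · exact ⟨Or.inl h, mem_union_bdry_of_adjZ h (adjZ_comm.1 hadj)⟩
  · exact ⟨mem_union_bdry_of_adjZ h hadj, Or.inl h⟩

lemma edgesOf_eq_union (D : Set Z2) : edgesOf D = intEdges D ∪ bdEdges D := by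
  refine Set.Subset.antisymm (fun b hb => ?_)
    (Set.union_subset (intEdges_subset_edgesOf D) (bdEdges_subset_edgesOf D))
  obtain ⟨h₁, h₂⟩ := mem_union_bdry_of_mem_edgesOf hb
  rcases hb.2 with h | h
  · exact h₂.imp (fun h' => ⟨hb.1, h, h'⟩) fun h' => ⟨hb.1, Or.inl ⟨h, h'⟩⟩
  · exact h₁.imp (fun h' => ⟨hb.1, h', h⟩) fun h' => ⟨hb.1, Or.inr ⟨h', h⟩⟩

lemma disjoint_intEdges_bdEdges (D : Set Z2) : Disjoint (intEdges D) (bdEdges D) :=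
  Set.disjoint_left.2 fun _ hi hb =>
    hb.2.elim (fun h => h.2.1 hi.2.2) fun h => h.1.1 hi.2.1

lemma bEnd_mem_bdry (hb : b ∈ bdEdges D) : bEnd D b ∈ bdry D := by
  rcases hb.2 with ⟨h₁, h₂⟩ | ⟨h₁, -⟩
  · rwa [bEnd, if_pos h₁]
  · rwa [bEnd, if_neg h₁.1]

end Edges

section EdgeFunctionals

/-- The Dirichlet energy `∑_{b ∈ D*°} |∇u(b)|²`. -/
def dirichletEnergy (D : Set Z2) (u : Z2 → ℝ) : ℝ :=
  ∑ᶠ b ∈ intEdges D, |grad u b| ^ 2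

/-- The boundary term `∑_{b ∈ ∂D*} |φ(x_b)| |∇u(b)|` for boundary data `φ`. -/
def boundaryFlux (D : Set Z2) (φ u : Z2 → ℝ) : ℝ :=
  ∑ᶠ b ∈ bdEdges D, |φ (bEnd D b)| * |grad u b|

variable {D : Set Z2} {κ : ℝ} {u φ ψ : Z2 → ℝ} {b : Z2 × Z2}

lemma dirichletEnergy_nonneg (D : Set Z2) (u : Z2 → ℝ) : 0 ≤ dirichletEnergy D u :=
  finsum_nonneg fun _ => finsum_nonneg fun _ => by positivity

lemma boundaryFlux_nonneg (D : Set Z2) (φ u : Z2 → ℝ) : 0 ≤ boundaryFlux D φ u :=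
  finsum_nonneg fun _ => finsum_nonneg fun _ => by positivity

lemma boundaryFlux_congr (h : Set.EqOn φ ψ (bdry D)) :
    boundaryFlux D φ u = boundaryFlux D ψ u :=
  finsum_mem_congr rfl fun _ hb => by rw [h (bEnd_mem_bdry hb)]

lemma neg_grad_indicator_mul_le_of_mem_intEdges {a : ℝ} (hb : b ∈ intEdges D) (ha : a ≤ κ) :
    -(grad (D.indicator u) b * (κ * grad u b)) ≤ -a * |grad u b| ^ 2 := by
  have hcut : grad (D.indicator u) b = grad u b := by
    simp only [grad, Set.indicator_of_mem hb.2.1, Set.indicator_of_mem hb.2.2]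
  calc -(grad (D.indicator u) b * (κ * grad u b)) = -κ * |grad u b| ^ 2 := by
        rw [hcut, sq_abs]; ring
    _ ≤ -a * |grad u b| ^ 2 := by gcongr

lemma neg_grad_indicator_mul_le_of_mem_bdEdges {A : ℝ} (hb : b ∈ bdEdges D)
    (hκ : κ ∈ Set.Icc 0 A) :
    -(grad (D.indicator u) b * (κ * grad u b)) ≤ A * (|u (bEnd D b)| * |grad u b|) := by
  rcases hb.2 with ⟨h₁, h₂⟩ | ⟨h₁, h₂⟩
  · simpa only [grad, bEnd, if_pos h₁, Set.indicator_of_mem h₁, Set.indicator_of_notMem h₂.1,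
      zero_sub, neg_mul, neg_neg] using mul_mul_sub_le_mul_abs_mul_abs (y := u b.1) (z := u b.2) hκ
  · have h := mul_mul_sub_le_mul_abs_mul_abs (y := u b.2) (z := u b.1) hκ
    rw [abs_sub_comm] at h
    calc -(grad (D.indicator u) b * (κ * grad u b)) = u b.2 * (κ * (u b.1 - u b.2)) := by
          simp only [grad, Set.indicator_of_mem h₂, Set.indicator_of_notMem h₁.1]; ring
      _ ≤ A * (|u (bEnd D b)| * |grad u b|) := by rwa [bEnd, if_neg h₁.1]

end EdgeFunctionals

section WeightedLaplacian

/-- The discrete elliptic operator `u ↦ ∑_{y ∼ x} k(x, y) (u(y) - u(x))` on `D ∪ ∂D` with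
conductances `k`, written with the neighbors `y = x + e` as in the parabolic equation. -/
def weightedLaplacian (D : Finset Z2) (k : Z2 → Z2 → ℝ) (u : Z2 → ℝ) (x : Z2) : ℝ :=
  ∑ e ∈ nbrs, if x + e ∈ (D : Set Z2) ∪ bdry D then k x (x + e) * (u (x + e) - u x) else 0

variable {D : Finset Z2} {k : Z2 → Z2 → ℝ} {x : Z2}

lemma weightedLaplacian_of_mem (k : Z2 → Z2 → ℝ) (u : Z2 → ℝ) (hx : x ∈ D) :
    weightedLaplacian D k u x = ∑ e ∈ nbrs, k x (x + e) * (u (x + e) - u x) :=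
  Finset.sum_congr rfl fun _ he =>
    if_pos (mem_union_bdry_of_adjZ hx (adjZ_add_of_mem_nbrs x he))

lemma filter_fst_edgesOf (hx : x ∈ D) :
    {b ∈ (finite_edgesOf D).toFinset | b.1 = x} = {(x, x + (1, 0)), (x, x + (0, 1))} := by
  ext ⟨y, z⟩
  simp only [Finset.mem_filter, Set.Finite.mem_toFinset, edgesOf, Set.mem_ofPred_eq,
    Finset.mem_coe, Finset.mem_insert, Finset.mem_singleton, Prod.mk.injEq]
  constructor
  · rintro ⟨⟨h, -⟩, rfl⟩
    exact h.imp (⟨rfl, ·⟩) (⟨rfl, ·⟩)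
  · rintro (⟨rfl, h⟩ | ⟨rfl, h⟩) <;> simp [h, hx]

lemma filter_snd_edgesOf (hx : x ∈ D) :
    {b ∈ (finite_edgesOf D).toFinset | b.2 = x} = {(x - (1, 0), x), (x - (0, 1), x)} := by
  ext ⟨y, z⟩
  simp only [Finset.mem_filter, Set.Finite.mem_toFinset, edgesOf, Set.mem_ofPred_eq,
    Finset.mem_coe, Finset.mem_insert, Finset.mem_singleton, Prod.mk.injEq]
  constructor
  · rintro ⟨⟨h, -⟩, rfl⟩
    exact h.imp (⟨eq_sub_of_add_eq ·.symm, rfl⟩) (⟨eq_sub_of_add_eq ·.symm, rfl⟩)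
  · rintro (⟨h, rfl⟩ | ⟨h, rfl⟩) <;> simp [h, hx]

lemma weightedLaplacian_eq_divergence (hk : ∀ x y, k x y = k y x) (u : Z2 → ℝ) (hx : x ∈ D) :
    weightedLaplacian D k u x =
      divergence (finite_edgesOf D).toFinset (fun b => k b.1 b.2 * grad u b) x := by
  rw [weightedLaplacian_of_mem k u hx, divergence, filter_fst_edgesOf hx,
    filter_snd_edgesOf hx, Finset.sum_pair (by simp), Finset.sum_pair (by simp)]
  have hneg₁ : x + (-1, 0) = x - (1, 0) := by simp [sub_eq_add_neg]
  have hneg₂ : x + (0, -1) = x - (0, 1) := by simp [sub_eq_add_neg]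
  simp only [sum_nbrs, grad, hneg₁, hneg₂, hk x (x - _)]
  ring

lemma sum_mul_weightedLaplacian (hk : ∀ x y, k x y = k y x) (u w : Z2 → ℝ) :
    ∑ x ∈ D, w x * weightedLaplacian D k u x =
      ∑ᶠ b ∈ edgesOf (D : Set Z2),
        -(grad ((D : Set Z2).indicator w) b * (k b.1 b.2 * grad u b)) := by
  rw [finsum_mem_eq_finite_toFinset_sum _ (finite_edgesOf D), Finset.sum_neg_distrib]
  refine Eq.trans ?_ (sum_mul_divergence _ D w fun b => k b.1 b.2 * grad u b)
  exact Finset.sum_congr rfl fun x hx => by rw [weightedLaplacian_eq_divergence hk u hx]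

lemma sum_mul_weightedLaplacian_le {a A : ℝ} (hk : ∀ x y, k x y = k y x)
    (hint : ∀ b ∈ intEdges (D : Set Z2), a ≤ k b.1 b.2)
    (hbd : ∀ b ∈ bdEdges (D : Set Z2), k b.1 b.2 ∈ Set.Icc 0 A) (u : Z2 → ℝ) :
    ∑ x ∈ D, u x * weightedLaplacian D k u x ≤
      A * boundaryFlux D u u - a * dirichletEnergy D u := by
  rw [sum_mul_weightedLaplacian hk, edgesOf_eq_union,
    finsum_mem_union (disjoint_intEdges_bdEdges _) (finite_intEdges D) (finite_bdEdges D),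
    sub_eq_neg_add, ← neg_mul, boundaryFlux, dirichletEnergy,
    mul_finsum_mem, mul_finsum_mem]
  exact add_le_add
    (finsum_mem_le_finsum_mem (finite_intEdges D) fun b hb =>
      neg_grad_indicator_mul_le_of_mem_intEdges hb (hint b hb))
    (finsum_mem_le_finsum_mem (finite_bdEdges D) fun b hb =>
      neg_grad_indicator_mul_le_of_mem_bdEdges hb (hbd b hb))

end WeightedLaplacian

/-- Solutions on `[0, T]` of the discrete parabolic equation on `D` with rates `c` and static
boundary data. Time derivatives are taken within `[0, T]`, one-sided at the endpoints. -/
structure IsStaticParabolicSolution (D : Finset Z2) (T : ℝ) (c : ℝ → Z2 → Z2 → ℝ)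
    (f : ℝ → Z2 → ℝ) : Prop where
  hasDerivWithinAt : ∀ x ∈ D, ∀ t ∈ Set.Icc 0 T,
    HasDerivWithinAt (fun s => f s x) (weightedLaplacian D (c t) (f t) x) (Set.Icc 0 T) t
  eqOn_bdry : ∀ t ∈ Set.Icc 0 T, Set.EqOn (f t) (f 0) (bdry (D : Set Z2))

namespace IsStaticParabolicSolution

variable {D : Finset Z2} {T : ℝ} {c : ℝ → Z2 → Z2 → ℝ} {f : ℝ → Z2 → ℝ}

lemma continuousOn_apply (hf : IsStaticParabolicSolution D T c f) {x : Z2}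
    (hx : x ∈ (D : Set Z2) ∪ bdry D) : ContinuousOn (fun t => f t x) (Set.Icc 0 T) := by
  rcases hx with hx | hx
  · exact fun t ht => (hf.hasDerivWithinAt x hx t ht).continuousWithinAt
  · exact continuousOn_const.congr fun t ht => hf.eqOn_bdry t ht hx

lemma continuousOn_grad (hf : IsStaticParabolicSolution D T c f) {b : Z2 × Z2}
    (hb : b ∈ edgesOf (D : Set Z2)) : ContinuousOn (fun t => grad (f t) b) (Set.Icc 0 T) :=
  (hf.continuousOn_apply (mem_union_bdry_of_mem_edgesOf hb).2).sub
    (hf.continuousOn_apply (mem_union_bdry_of_mem_edgesOf hb).1)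

lemma continuousOn_dirichletEnergy (hf : IsStaticParabolicSolution D T c f) :
    ContinuousOn (fun t => dirichletEnergy D (f t)) (Set.Icc 0 T) :=
  continuousOn_finsum_mem (finite_intEdges D) fun _ hb =>
    (hf.continuousOn_grad (intEdges_subset_edgesOf _ hb)).abs.pow 2

lemma continuousOn_boundaryFlux (hf : IsStaticParabolicSolution D T c f) (φ : Z2 → ℝ) :
    ContinuousOn (fun t => boundaryFlux D φ (f t)) (Set.Icc 0 T) :=
  continuousOn_finsum_mem (finite_bdEdges D) fun _ hb =>
    continuousOn_const.mul (hf.continuousOn_grad (bdEdges_subset_edgesOf _ hb)).abs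

lemma hasDerivWithinAt_sum_sq (hf : IsStaticParabolicSolution D T c f) {t : ℝ}
    (ht : t ∈ Set.Icc 0 T) :
    HasDerivWithinAt (fun s => ∑ x ∈ D, f s x ^ 2)
      (2 * ∑ x ∈ D, f t x * weightedLaplacian D (c t) (f t) x) (Set.Icc 0 T) t := by
  rw [Finset.mul_sum]
  refine HasDerivWithinAt.fun_sum fun x hx => ?_
  refine ((hf.hasDerivWithinAt x hx t ht).fun_pow 2).congr_deriv ?_
  simp only [Nat.cast_ofNat, Nat.add_one_sub_one, pow_one, mul_assoc]

end IsStaticParabolicSolution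

theorem energy_inequality_general {a A T : ℝ} (hT : 0 ≤ T) {D : Finset Z2}
    {c : ℝ → Z2 → Z2 → ℝ} (hc : ∀ t ∈ Set.Icc 0 T, ∀ x y, c t x y = c t y x)
    (hint : ∀ t ∈ Set.Icc 0 T, ∀ b ∈ intEdges (D : Set Z2), a ≤ c t b.1 b.2)
    (hbd : ∀ t ∈ Set.Icc 0 T, ∀ b ∈ bdEdges (D : Set Z2), c t b.1 b.2 ∈ Set.Icc 0 A)
    {f : ℝ → Z2 → ℝ} (hf : IsStaticParabolicSolution D T c f) :
    ∑ x ∈ D, f T x ^ 2 + 2 * a * ∫ t in (0 : ℝ)..T, dirichletEnergy D (f t) ≤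
      ∑ x ∈ D, f 0 x ^ 2 + 2 * A * ∫ t in (0 : ℝ)..T, boundaryFlux D (f 0) (f t) := by
  refine add_mul_integral_le_of_deriv_le (G := fun t => ∑ x ∈ D, f t x ^ 2) hT
    (fun t ht => hf.hasDerivWithinAt_sum_sq ht)
    (hf.continuousOn_dirichletEnergy.intervalIntegrable_of_Icc hT)
    ((hf.continuousOn_boundaryFlux (f 0)).intervalIntegrable_of_Icc hT) fun t ht => ?_
  replace ht := Set.Ioo_subset_Icc_self ht
  have hdiss := sum_mul_weightedLaplacian_le (hc t ht) (hint t ht) (hbd t ht) (f t)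
  rw [boundaryFlux_congr (hf.eqOn_bdry t ht)] at hdiss
  linarith

/-- Energy inequality.
There is `C > 0` depending only on `0 < a ≤ A < ∞` such that: if `f` solves the discrete
parabolic equation `∂_t f_t(x) = Σ_{y∼x, y ∈ D∪∂D} c_t((x,y))(f_t(y) − f_t(x))` on `D` for
`t ∈ [0,T]` with rates `c_t(b) ∈ [a,A]` measurable in `t`, and `f` is static on `∂D`, then
`Σ_D f_T² + ∫_0^T Σ_{D*°} |∇f_t|² ≤ C (Σ_D f_0² + ∫_0^T Σ_{∂D*} |f_0(x_b)||∇f_t(b)|)`. -/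
theorem energy_inequality (a A : ℝ) (ha : 0 < a) (haA : a ≤ A) :
    ∃ C : ℝ, 0 < C ∧
      ∀ (D : Finset Z2) (T : ℝ), 0 < T →
      ∀ c : ℝ → Z2 → Z2 → ℝ,
        (∀ t x y, c t x y = c t y x) →
        (∀ t ∈ Set.Icc (0 : ℝ) T, ∀ b ∈ edgesOf (D : Set Z2),
          a ≤ c t b.1 b.2 ∧ c t b.1 b.2 ≤ A) →
        (∀ x y : Z2, Measurable fun t : Set.Icc (0 : ℝ) T => c (t : ℝ) x y) →
      ∀ f : ℝ → Z2 → ℝ,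
        (∀ x ∈ D, ∀ t ∈ Set.Icc (0 : ℝ) T,
          HasDerivAt (fun s => f s x)
            (∑ e ∈ nbrs, if (x + e) ∈ (D : Set Z2) ∪ bdry (D : Set Z2)
              then c t x (x + e) * (f t (x + e) - f t x) else 0) t) →
        (∀ x ∈ bdry (D : Set Z2), ∀ t ∈ Set.Icc (0 : ℝ) T, f t x = f 0 x) →
        (∑ x ∈ D, (f T x) ^ 2)
            + (∫ t in (0 : ℝ)..T, ∑ᶠ b ∈ intEdges (D : Set Z2), |grad (f t) b| ^ 2)
          ≤ C * ((∑ x ∈ D, (f 0 x) ^ 2)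
            + ∫ t in (0 : ℝ)..T, ∑ᶠ b ∈ bdEdges (D : Set Z2),
                |f 0 (bEnd (D : Set Z2) b)| * |grad (f t) b|) := by
  refine ⟨max 1 (2 * A) / min 1 (2 * a), by positivity, fun D T hT c hc hcA _ f hf hbd => ?_⟩
  have hsol : IsStaticParabolicSolution D T c f :=
    ⟨fun x hx t ht => (hf x hx t ht).hasDerivWithinAt, fun t ht x hx => hbd x hx t ht⟩
  refine add_le_div_mul_add_of_weighted_le (by positivity)
    (Finset.sum_nonneg fun x _ => sq_nonneg _)
    (intervalIntegral.integral_nonneg hT.le fun t _ => dirichletEnergy_nonneg D (f t))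
    (Finset.sum_nonneg fun x _ => sq_nonneg _)
    (intervalIntegral.integral_nonneg hT.le fun t _ => boundaryFlux_nonneg D (f 0) (f t))
    (energy_inequality_general hT.le (fun t _ => hc t)
      (fun t ht b hb => (hcA t ht b (intEdges_subset_edgesOf _ hb)).1) (fun t ht b hb => ?_) hsol)
  have hrate := hcA t ht b (bdEdges_subset_edgesOf _ hb)
  exact ⟨ha.le.trans hrate.1, hrate.2⟩

end
end
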